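/- (Lemma: accuracy of U_{(1)}.) Under the conditions of the SARRS upper bound theorem (A ∈ Θ(s,r,d,γ), λ ≥ 4σ max_j ‖X_{*j}‖(√r + √(4 log p)), Condition SE(s_*, c_*, K) with s_* ≥ 2s and 6c_* ≤ √(s_*/s − 1), σ_r(V'V_{(0)}) ≥ c_0 for an absolute constant c_0 > 0, and noise in Y_{(1)} i.i.d. N(0,4σ²)), let U ∈ O(n,r) be the left singular vector matrix of XA and let U_{(1)} ∈ O(n,r) be the matrix of top-r left singular vectors of XB_{(1)}, where B_{(1)} = argmin_{B ∈ ℝ^{p×r}} ‖Y_{(1)}V_{(0)} − XB‖_F²/2 + λ‖B‖_{2,1}. Then there exists a constant C depending only on κ_±(s_*), c_* and c_0 such that, with probability at least 1 − 1/p, ‖U_{(1)}U_{(1)}' − UU'‖_F ≤ C √s λ / d. -/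

import Mathlib

open MeasureTheory ProbabilityTheory Matrix Set
open scoped ENNReal NNReal

noncomputable section

/-- Euclidean (ℓ₂) norm of a finitely indexed real vector. -/
def l2norm {I : Type*} [Fintype I] (v : I → ℝ) : ℝ := Real.sqrt (∑ i, v i ^ 2)

/-- Frobenius norm of a real matrix. -/
def frobNorm {I J : Type*} [Fintype I] [Fintype J] (M : Matrix I J ℝ) : ℝ :=
  Real.sqrt (∑ i, ∑ j, M i j ^ 2)

/-- ℓ₂/ℓ₁ norm: the sum of the ℓ₂ norms of the rows. -/
def norm21 {I J : Type*} [Fintype I] [Fintype J] (M : Matrix I J ℝ) : ℝ :=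
  ∑ i, l2norm (M i)

open Classical in
/-- Row support: indices of nonzero rows. -/
def rowSupport {I J : Type*} [Fintype I] [Fintype J] (M : Matrix I J ℝ) : Finset I :=
  Finset.univ.filter (fun i => M i ≠ 0)

/-- The j-th largest singular value (j ≥ 1), via the Courant–Fischer max–min
characterization: `σ_j(M) = max_{dim V = j} min_{v ∈ V, ‖v‖=1} ‖Mv‖`. -/
def singularValue {I J : Type*} [Fintype I] [Fintype J] (M : Matrix I J ℝ) (j : ℕ) : ℝ :=
  sSup { t | ∃ V : Submodule ℝ (J → ℝ), Module.finrank ℝ V = j ∧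
    t = sInf { u | ∃ v ∈ V, l2norm v = 1 ∧ u = l2norm (M.mulVec v) } }

/-- Operator norm (largest singular value). -/
def opNorm {I J : Type*} [Fintype I] [Fintype J] (M : Matrix I J ℝ) : ℝ :=
  sSup { t | ∃ v : J → ℝ, l2norm v = 1 ∧ t = l2norm (M.mulVec v) }

/-- Schatten-q norm. -/
def schattenNorm {I J : Type*} [Fintype I] [Fintype J] (M : Matrix I J ℝ) (q : ℝ) : ℝ :=
  (∑ i ∈ Finset.Icc 1 (min (Fintype.card I) (Fintype.card J)), singularValue M i ^ q) ^ (1 / q)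

/-- Squared lower k-sparse Riesz constant `κ₋²(k)`:
the minimum over column subsets B with |B| = k of the smallest eigenvalue of X_B' X_B. -/
def kappaMinusSq {n p : ℕ} (X : Matrix (Fin n) (Fin p) ℝ) (k : ℕ) : ℝ :=
  sInf { t | ∃ B : Finset (Fin p), B.card = k ∧ ∃ v : Fin p → ℝ,
    (∀ i, i ∉ B → v i = 0) ∧ l2norm v = 1 ∧ t = l2norm (X.mulVec v) ^ 2 }

/-- Squared upper k-sparse Riesz constant `κ₊²(k)`. -/
def kappaPlusSq {n p : ℕ} (X : Matrix (Fin n) (Fin p) ℝ) (k : ℕ) : ℝ :=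
  sSup { t | ∃ B : Finset (Fin p), B.card = k ∧ ∃ v : Fin p → ℝ,
    (∀ i, i ∉ B → v i = 0) ∧ l2norm v = 1 ∧ t = l2norm (X.mulVec v) ^ 2 }

def kappaMinus {n p : ℕ} (X : Matrix (Fin n) (Fin p) ℝ) (k : ℕ) : ℝ :=
  Real.sqrt (kappaMinusSq X k)

def kappaPlus {n p : ℕ} (X : Matrix (Fin n) (Fin p) ℝ) (k : ℕ) : ℝ :=
  Real.sqrt (kappaPlusSq X k)

/-- Membership in the parameter space Θ(s, r, d, γ): rank r, all nonzero singular values in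
(d, γd], and at most s nonzero rows. (Singular values are automatically nonincreasing.) -/
def memTheta {p m : ℕ} (A : Matrix (Fin p) (Fin m) ℝ) (s r : ℕ) (d γ : ℝ) : Prop :=
  A.rank = r ∧ 0 < d ∧ singularValue A 1 ≤ γ * d ∧ d < singularValue A r ∧
    (rowSupport A).card ≤ s

/-- `V` is a matrix of top-r right singular vectors of `M`: the columns of `V` are orthonormal
eigenvectors of `MᵀM`, the j-th column with eigenvalue `σ_j(M)²`. -/
def IsRightSingularVectors {I J : Type*} [Fintype I] [Fintype J] {r : ℕ}
    (M : Matrix I J ℝ) (V : Matrix J (Fin r) ℝ) : Prop :=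
  Vᵀ * V = 1 ∧ ∀ j : Fin r,
    (Mᵀ * M).mulVec (fun i => V i j) = (singularValue M (j.1 + 1)) ^ 2 • (fun i => V i j)

/-- `U` is a matrix of top-r left singular vectors of `M`. -/
def IsLeftSingularVectors {I J : Type*} [Fintype I] [Fintype J] {r : ℕ}
    (M : Matrix I J ℝ) (U : Matrix I (Fin r) ℝ) : Prop :=
  IsRightSingularVectors Mᵀ U

instance matrixMeasurableSpace {n m : ℕ} : MeasurableSpace (Matrix (Fin n) (Fin m) ℝ) :=
  (inferInstance : MeasurableSpace (Fin n → Fin m → ℝ))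

/-- Law of an n×m random matrix with i.i.d. N(0, v) entries. -/
def gaussianMatrix (n m : ℕ) (v : ℝ≥0) : Measure (Matrix (Fin n) (Fin m) ℝ) :=
  Measure.pi fun _ : Fin n => Measure.pi fun _ : Fin m => gaussianReal 0 v

open Classical in
/-- Kullback–Leibler divergence D(P‖Q). -/
def klDivM {Ω : Type*} [MeasurableSpace Ω] (P Q : Measure Ω) : ℝ≥0∞ :=
  if P ≪ Q ∧ Integrable (fun x => Real.log (P.rnDeriv Q x).toReal) P
  then ENNReal.ofReal (∫ x, Real.log (P.rnDeriv Q x).toReal ∂P)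
  else ∞

/-- ε-packing number of T with respect to the distance ρ: the maximal cardinality of a subset
of T whose pairwise ρ-distances are all at least ε. -/
def packingNumber {α : Type*} (T : Set α) (ρ : α → α → ℝ) (ε : ℝ) : ℕ :=
  sSup { k | ∃ S : Finset α, ↑S ⊆ T ∧ (∀ x ∈ S, ∀ y ∈ S, x ≠ y → ε ≤ ρ x y) ∧ S.card = k }

/-- Moore–Penrose pseudoinverse (characterized by the four Penrose equations). -/
def IsMoorePenrose {k : ℕ} (M Mi : Matrix (Fin k) (Fin k) ℝ) : Prop :=
  M * Mi * M = M ∧ Mi * M * Mi = Mi ∧ (M * Mi)ᵀ = M * Mi ∧ (Mi * M)ᵀ = Mi * M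

/-!
On the event that every row of `Xᵀ Z V₀` has norm at most `λ / 2`, the group lasso `B` satisfies
`‖X B - X A V₀‖ ≲ √s λ`: the error lies in the cone where the off-support rows are dominated by the
on-support rows, and there the sparse eigenvalue condition makes `X` bounded below. The event has
probability at least `1 - 1 / p`: for each column `x` of `X` the row `xᵀ Z V₀` is Gaussian with
covariance `4 σ² ‖x‖² I`, so a Chernoff bound for its squared norm and a union bound suffice.

The columns of `X A V₀` span the range of `U`, and its least nonzero singular value is at least
`κ₋ d c₀`: one factor `κ₋` from the sparsity of `A`, one factor `d` from `σ_r(A)`, one factor `c₀`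
from the alignment of `V₀` with `V`. A `sin Θ` argument turns the distance between `X B` and
`X A V₀` into the distance between the projections onto the ranges of `U₁` and `U`.
-/

section Norms

variable {I J : Type*} [Fintype I] [Fintype J]

lemma l2norm_nonneg (v : I → ℝ) : 0 ≤ l2norm v := Real.sqrt_nonneg _

lemma l2norm_sq (v : I → ℝ) : l2norm v ^ 2 = ∑ i, v i ^ 2 :=
  Real.sq_sqrt (Finset.sum_nonneg fun i _ => sq_nonneg (v i))

lemma l2norm_sq_eq_dotProduct (v : I → ℝ) : l2norm v ^ 2 = v ⬝ᵥ v := by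
  rw [l2norm_sq]
  simp only [dotProduct, sq]

lemma l2norm_eq_norm_toLp (v : I → ℝ) : l2norm v = ‖WithLp.toLp 2 v‖ := by
  simp [EuclideanSpace.norm_eq, l2norm]

lemma l2norm_smul (c : ℝ) (v : I → ℝ) : l2norm (c • v) = |c| * l2norm v := by
  simp only [l2norm_eq_norm_toLp, WithLp.toLp_smul, norm_smul, Real.norm_eq_abs]

lemma l2norm_add_le (v w : I → ℝ) : l2norm (v + w) ≤ l2norm v + l2norm w := by
  simpa only [l2norm_eq_norm_toLp, WithLp.toLp_add] using norm_add_le _ _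

lemma l2norm_neg (v : I → ℝ) : l2norm (-v) = l2norm v := by
  simp only [l2norm_eq_norm_toLp, WithLp.toLp_neg, norm_neg]

lemma l2norm_eq_zero {v : I → ℝ} : l2norm v = 0 ↔ v = 0 := by
  rw [l2norm_eq_norm_toLp, norm_eq_zero, WithLp.toLp_eq_zero]

lemma l2norm_zero : l2norm (0 : I → ℝ) = 0 := l2norm_eq_zero.2 rfl

lemma l2norm_pos {v : I → ℝ} (hv : v ≠ 0) : 0 < l2norm v :=
  (l2norm_nonneg v).lt_of_ne' (mt l2norm_eq_zero.1 hv)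

lemma l2norm_inv_smul_self {v : I → ℝ} (hv : v ≠ 0) : l2norm ((l2norm v)⁻¹ • v) = 1 := by
  rw [l2norm_smul, abs_of_pos (inv_pos.2 (l2norm_pos hv)), inv_mul_cancel₀ (l2norm_pos hv).ne']

lemma dotProduct_le_l2norm_mul_l2norm (v w : I → ℝ) : v ⬝ᵥ w ≤ l2norm v * l2norm w :=
  Real.sum_mul_le_sqrt_mul_sqrt _ _ _

lemma frobNorm_nonneg (M : Matrix I J ℝ) : 0 ≤ frobNorm M := Real.sqrt_nonneg _

lemma frobNorm_sq_eq_sum_row (M : Matrix I J ℝ) : frobNorm M ^ 2 = ∑ i, l2norm (M i) ^ 2 := by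
  simp only [l2norm_sq]
  exact Real.sq_sqrt (Finset.sum_nonneg fun i _ => Finset.sum_nonneg fun j _ => sq_nonneg (M i j))

lemma frobNorm_transpose (M : Matrix I J ℝ) : frobNorm Mᵀ = frobNorm M :=
  congrArg Real.sqrt Finset.sum_comm

lemma frobNorm_sq_eq_sum_col (M : Matrix I J ℝ) : frobNorm M ^ 2 = ∑ j, l2norm (Mᵀ j) ^ 2 := by
  rw [← frobNorm_transpose, frobNorm_sq_eq_sum_row]

lemma frobNorm_sq_eq_trace (M : Matrix I J ℝ) : frobNorm M ^ 2 = (Mᵀ * M).trace := by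
  simp only [frobNorm_sq_eq_sum_col, l2norm_sq_eq_dotProduct]
  rfl

lemma frobNorm_eq_l2norm_vec (M : Matrix I J ℝ) : frobNorm M = l2norm (vec M) := by
  rw [← frobNorm_transpose]
  simp only [frobNorm, l2norm, Fintype.sum_prod_type, vec, transpose_apply]

lemma frobNorm_sub_comm (M N : Matrix I J ℝ) : frobNorm (M - N) = frobNorm (N - M) := by
  rw [← neg_sub, frobNorm_eq_l2norm_vec, frobNorm_eq_l2norm_vec, vec_neg, l2norm_neg]

lemma frobNorm_smul_sq (c : ℝ) (M : Matrix I J ℝ) :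
    frobNorm (c • M) ^ 2 = c ^ 2 * frobNorm M ^ 2 := by
  rw [frobNorm_eq_l2norm_vec, frobNorm_eq_l2norm_vec, vec_smul, l2norm_smul, mul_pow, sq_abs]

lemma trace_transpose_mul_le (M N : Matrix I J ℝ) :
    (Mᵀ * N).trace ≤ frobNorm M * frobNorm N := by
  simpa only [frobNorm_eq_l2norm_vec, vec_dotProduct_vec] using
    dotProduct_le_l2norm_mul_l2norm (vec M) (vec N)

lemma trace_transpose_mul_comm (M N : Matrix I J ℝ) : (Nᵀ * M).trace = (Mᵀ * N).trace := by
  rw [← trace_transpose, transpose_mul, transpose_transpose]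

lemma trace_transpose_mul_eq_sum_row (M N : Matrix I J ℝ) :
    (Mᵀ * N).trace = ∑ i, M i ⬝ᵥ N i := by
  rw [← trace_transpose_mul_comm, Matrix.trace_mul_comm]
  rfl

lemma frobNorm_add_sq (M N : Matrix I J ℝ) :
    frobNorm (M + N) ^ 2 = frobNorm M ^ 2 + 2 * (Mᵀ * N).trace + frobNorm N ^ 2 := by
  simp only [frobNorm_sq_eq_trace, transpose_add, Matrix.add_mul, Matrix.mul_add, trace_add,
    trace_transpose_mul_comm M N]
  ring

lemma frobNorm_sub_sq (M N : Matrix I J ℝ) :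
    frobNorm (M - N) ^ 2 = frobNorm M ^ 2 - 2 * (Mᵀ * N).trace + frobNorm N ^ 2 := by
  simp only [frobNorm_sq_eq_trace, transpose_sub, Matrix.sub_mul, Matrix.mul_sub, trace_sub,
    trace_transpose_mul_comm M N]
  ring

lemma l2norm_mulVec_le_frobNorm_mul (M : Matrix I J ℝ) (v : J → ℝ) :
    l2norm (M *ᵥ v) ≤ frobNorm M * l2norm v := by
  refine le_of_sq_le_sq ?_ (mul_nonneg (frobNorm_nonneg M) (l2norm_nonneg v))
  rw [mul_pow, frobNorm_sq_eq_sum_row, Finset.sum_mul, l2norm_sq]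
  refine Finset.sum_le_sum fun i _ => ?_
  rw [l2norm_sq, l2norm_sq]
  exact Finset.sum_mul_sq_le_sq_mul_sq _ _ _

lemma l2norm_mulVec_of_transpose_mul_self_eq_one [DecidableEq J] {V : Matrix I J ℝ}
    (hV : Vᵀ * V = 1) (w : J → ℝ) : l2norm (V *ᵥ w) = l2norm w := by
  rw [← sq_eq_sq₀ (l2norm_nonneg _) (l2norm_nonneg _), l2norm_sq_eq_dotProduct,
    l2norm_sq_eq_dotProduct, dotProduct_mulVec, vecMul_mulVec, hV, vecMul_one]

lemma frobNorm_vecMulVec_sq (x : I → ℝ) (u : J → ℝ) :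
    frobNorm (vecMulVec x u) ^ 2 = l2norm x ^ 2 * l2norm u ^ 2 := by
  simp only [frobNorm_sq_eq_sum_row, l2norm_sq, vecMulVec_apply, mul_pow, Finset.sum_mul_sum]

end Norms

section GaussianTail

variable {ι : Type*} [Fintype ι] {v : ℝ≥0}

lemma measurable_l2norm : Measurable (l2norm : (ι → ℝ) → ℝ) := by
  unfold l2norm
  fun_prop

lemma mgf_sq_div_gaussianReal (hv : v ≠ 0) {q : ℝ} (hq : 0 < q) :
    mgf (fun x => x ^ 2 / v) (gaussianReal 0 v) ((1 - 1 / q ^ 2) / 2) = q := by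
  have : (0 : ℝ) < v := NNReal.coe_pos.2 (pos_of_ne_zero hv)
  set w : ℝ≥0 := v * Real.toNNReal q ^ 2
  have hw : (w : ℝ) = v * q ^ 2 := by simp [w, hq.le]
  have hw0 : w ≠ 0 := by
    rw [← NNReal.coe_ne_zero, hw]
    positivity
  -- Completing the square, the weighted `N(0, v)` density is `q` times that of `N(0, v * q ^ 2)`.
  have tilted_density (x : ℝ) : gaussianPDFReal 0 v x •
      Real.exp ((1 - 1 / q ^ 2) / 2 * (x ^ 2 / v)) = q * gaussianPDFReal 0 w x := by
    have hsqrt : √(2 * Real.pi * w) = √(2 * Real.pi * v) * q := by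
      rw [hw, ← mul_assoc, Real.sqrt_mul (by positivity), Real.sqrt_sq hq.le]
    have hexponent : -(x - 0) ^ 2 / (2 * (v : ℝ)) + (1 - 1 / q ^ 2) / 2 * (x ^ 2 / v) =
        -(x - 0) ^ 2 / (2 * w) := by
      rw [hw]
      field_simp
      ring
    rw [gaussianPDFReal, gaussianPDFReal, smul_eq_mul, mul_assoc, ← Real.exp_add, hexponent, hsqrt]
    field_simp
  simp only [mgf, integral_gaussianReal_eq_integral_smul hv, tilted_density]
  rw [integral_const_mul, integral_gaussianPDFReal_eq_one 0 hw0, mul_one]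

lemma mgf_l2norm_sq_div_pi_gaussianReal (hv : v ≠ 0) {q : ℝ} (hq : 0 < q) :
    mgf (fun y => l2norm y ^ 2 / v) (Measure.pi fun _ : ι => gaussianReal 0 v)
      ((1 - 1 / q ^ 2) / 2) = q ^ Fintype.card ι := by
  simp only [mgf, l2norm_sq, Finset.sum_div, Finset.mul_sum, Real.exp_sum]
  rw [integral_fintype_prod_eq_prod
    (f := fun (_ : ι) (x : ℝ) => Real.exp ((1 - 1 / q ^ 2) / 2 * (x ^ 2 / v)))]
  have hfactor := mgf_sq_div_gaussianReal hv hq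
  rw [mgf] at hfactor
  rw [hfactor, Finset.prod_const, Finset.card_univ]

lemma pi_gaussianReal_l2norm_sq_ge_le (hv : v ≠ 0) {q : ℝ} (hq : 1 ≤ q) (u : ℝ) :
    (Measure.pi fun _ : ι => gaussianReal 0 v).real {y | u ≤ l2norm y ^ 2 / v} ≤
      Real.exp (-((1 - 1 / q ^ 2) / 2) * u) * q ^ Fintype.card ι := by
  have hq0 : 0 < q := one_pos.trans_le hq
  have hθ : 0 ≤ (1 - 1 / q ^ 2) / 2 := by
    have : 1 / q ^ 2 ≤ 1 := (div_le_one (by positivity)).2 (one_le_pow₀ hq)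
    linarith
  have hmgf := mgf_l2norm_sq_div_pi_gaussianReal (ι := ι) hv hq0
  rw [← hmgf]
  refine measure_ge_le_exp_mul_mgf u hθ ?_
  by_contra hnot
  have hpow : (0 : ℝ) < q ^ Fintype.card ι := by positivity
  exact hpow.ne (by rw [← hmgf, mgf, integral_undef hnot])

lemma pi_gaussianReal_l2norm_ge_le [Nonempty ι] (hv : v ≠ 0) {t : ℝ} (ht : 0 ≤ t) :
    (Measure.pi fun _ : ι => gaussianReal 0 v).real
      {y | √v * (√(Fintype.card ι) + t) ≤ l2norm y} ≤ Real.exp (-(t ^ 2 / 2)) := by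
  set μ := Measure.pi fun _ : ι => gaussianReal 0 v
  set k : ℝ := √(Fintype.card ι)
  have hk : 0 < k := Real.sqrt_pos.2 (Nat.cast_pos.2 Fintype.card_pos)
  have hksq : k ^ 2 = Fintype.card ι := Real.sq_sqrt (Nat.cast_nonneg _)
  have hv' : (0 : ℝ) < v := NNReal.coe_pos.2 (pos_of_ne_zero hv)
  set q : ℝ := 1 + t / k with hqdef
  have hq : 1 ≤ q := le_add_of_nonneg_right (by positivity)
  have hexponent : (1 - 1 / q ^ 2) / 2 * (k + t) ^ 2 = k * t + t ^ 2 / 2 := by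
    have : k + t = k * q := by rw [hqdef]; field_simp
    rw [this]
    field_simp
    rw [hqdef]
    field_simp
    ring
  have hqpow : q ^ Fintype.card ι ≤ Real.exp (k * t) := by
    calc q ^ Fintype.card ι ≤ Real.exp (t / k) ^ Fintype.card ι := by
          gcongr
          linarith [Real.add_one_le_exp (t / k)]
      _ = Real.exp (k * t) := by
          rw [← Real.exp_nat_mul, ← hksq]
          congr 1
          field_simp
  calc μ.real {y | √v * (k + t) ≤ l2norm y}
      ≤ μ.real {y | (k + t) ^ 2 ≤ l2norm y ^ 2 / v} := by
        refine measureReal_mono fun y (hy : √v * (k + t) ≤ l2norm y) => ?_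
        rw [mem_ofPred_eq, le_div_iff₀ hv', ← Real.sq_sqrt hv'.le, ← mul_pow, mul_comm]
        gcongr
    _ ≤ Real.exp (-((1 - 1 / q ^ 2) / 2) * (k + t) ^ 2) * q ^ Fintype.card ι :=
        pi_gaussianReal_l2norm_sq_ge_le hv hq _
    _ ≤ Real.exp (-((1 - 1 / q ^ 2) / 2) * (k + t) ^ 2) * Real.exp (k * t) := by gcongr
    _ = Real.exp (-(t ^ 2 / 2)) := by
        rw [← Real.exp_add, neg_mul, hexponent]
        ring_nf

end GaussianTail

section GaussianMatrix

variable {n m p r : ℕ} {v : ℝ≥0}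

instance isProbabilityMeasure_gaussianMatrix (n m : ℕ) (v : ℝ≥0) :
    IsProbabilityMeasure (gaussianMatrix n m v) :=
  inferInstanceAs (IsProbabilityMeasure
    (Measure.pi fun _ : Fin n => Measure.pi fun _ : Fin m => gaussianReal 0 v))

lemma integral_cexp_trace_gaussianMatrix (W : Matrix (Fin n) (Fin m) ℝ) :
    ∫ z, Complex.exp ((zᵀ * W).trace * Complex.I) ∂gaussianMatrix n m v =
      Complex.exp (-(v * frobNorm W ^ 2 / 2) : ℝ) := by
  have hprod (z : Matrix (Fin n) (Fin m) ℝ) : Complex.exp ((zᵀ * W).trace * Complex.I) =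
      ∏ i, ∏ j, Complex.exp (W i j * z i j * Complex.I) := by
    simp only [trace_transpose_mul_eq_sum_row, dotProduct, ← Complex.exp_sum, ← Finset.sum_mul]
    push_cast
    simp only [mul_comm]
  have hrow (i : Fin n) : ∫ y, ∏ j, Complex.exp (W i j * y j * Complex.I)
      ∂(Measure.pi fun _ : Fin m => gaussianReal 0 v) =
        Complex.exp (∑ j, -(v * W i j ^ 2 / 2) : ℝ) := by
    rw [integral_fintype_prod_eq_prod
      (f := fun (j : Fin m) (x : ℝ) => Complex.exp (W i j * x * Complex.I))]
    simp only [← charFun_apply_real, charFun_gaussianReal, ← Complex.exp_sum]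
    push_cast
    simp
  simp only [hprod]
  refine (integral_fintype_prod_eq_prod
    (f := fun (i : Fin n) (y : Fin m → ℝ) => ∏ j, Complex.exp (W i j * y j * Complex.I))).trans ?_
  rw [Finset.prod_congr rfl fun i _ => hrow i, ← Complex.exp_sum, ← Complex.ofReal_sum]
  simp only [frobNorm_sq_eq_sum_row, l2norm_sq, Finset.mul_sum, Finset.sum_div,
    Finset.sum_neg_distrib]

lemma measurable_vecMul_mul (x : Fin n → ℝ) (V₀ : Matrix (Fin m) (Fin r) ℝ) :
    Measurable fun z : Matrix (Fin n) (Fin m) ℝ => x ᵥ* (z * V₀) := by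
  have (i : Fin n) (j : Fin m) : Measurable fun z : Matrix (Fin n) (Fin m) ℝ => z i j :=
    (measurable_pi_apply j).comp (measurable_pi_apply i)
  refine measurable_pi_lambda _ fun l => ?_
  simp only [vecMul, dotProduct, mul_apply]
  fun_prop

lemma map_vecMul_mul_gaussianMatrix (x : Fin n → ℝ) {V₀ : Matrix (Fin m) (Fin r) ℝ}
    (hV₀ : V₀ᵀ * V₀ = 1) :
    (gaussianMatrix n m v).map (fun z => x ᵥ* (z * V₀)) =
      Measure.pi fun _ => gaussianReal 0 (v * Real.toNNReal (l2norm x ^ 2)) := by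
  have hmeas := measurable_vecMul_mul x V₀
  have := Measure.isProbabilityMeasure_map (μ := gaussianMatrix n m v) hmeas.aemeasurable
  rw [← charFun_eq_pi_iff]
  intro t
  have hinner (z : Matrix (Fin n) (Fin m) ℝ) : inner ℝ (WithLp.toLp 2 (x ᵥ* (z * V₀))) t =
      (zᵀ * vecMulVec x (V₀ *ᵥ t)).trace := by
    rw [mul_vecMulVec, trace_vecMulVec, mulVec_transpose, dotProduct_mulVec, vecMul_vecMul,
      dotProduct_comm]
    rfl
  rw [Measure.map_map (by fun_prop) hmeas, charFun_apply,
    integral_map ((WithLp.measurable_toLp 2 _).comp hmeas).aemeasurable (by fun_prop)]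
  simp only [Function.comp_apply, hinner, integral_cexp_trace_gaussianMatrix, charFun_gaussianReal,
    ← Complex.exp_sum, frobNorm_vecMulVec_sq, l2norm_mulVec_of_transpose_mul_self_eq_one hV₀,
    NNReal.coe_mul, Real.coe_toNNReal _ (sq_nonneg (l2norm x))]
  rw [l2norm_sq (t : Fin r → ℝ)]
  simp only [← mul_assoc, Finset.mul_sum, Finset.sum_div]
  push_cast
  simp

lemma gaussianMatrix_l2norm_vecMul_mul_gt_le (hr : r ≠ 0) (hv : v ≠ 0) (x : Fin n → ℝ)
    {V₀ : Matrix (Fin m) (Fin r) ℝ} (hV₀ : V₀ᵀ * V₀ = 1) {t : ℝ} (ht : 0 ≤ t) :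
    (gaussianMatrix n m v).real {z | √v * l2norm x * (√r + t) < l2norm (x ᵥ* (z * V₀))} ≤
      Real.exp (-(t ^ 2 / 2)) := by
  rcases eq_or_ne x 0 with rfl | hx
  · simpa [l2norm_zero] using (Real.exp_pos _).le
  have hx' : 0 < l2norm x := l2norm_pos hx
  set w : ℝ≥0 := v * Real.toNNReal (l2norm x ^ 2) with hw
  have hw0 : w ≠ 0 := mul_ne_zero hv (Real.toNNReal_pos.2 (by positivity)).ne'
  have hsqrt : √(w : ℝ) = √v * l2norm x := by
    rw [hw, NNReal.coe_mul, Real.coe_toNNReal _ (sq_nonneg _), Real.sqrt_mul v.coe_nonneg,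
      Real.sqrt_sq hx'.le]
  have : Nonempty (Fin r) := ⟨⟨0, Nat.pos_of_ne_zero hr⟩⟩
  have htail := pi_gaussianReal_l2norm_ge_le (ι := Fin r) hw0 ht
  rw [Fintype.card_fin, hsqrt, ← map_vecMul_mul_gaussianMatrix x hV₀, map_measureReal_apply
    (measurable_vecMul_mul x V₀) (measurableSet_le measurable_const measurable_l2norm)] at htail
  refine (measureReal_mono fun z hz => ?_).trans htail
  exact le_of_lt (show √v * l2norm x * (√r + t) < _ from hz)

lemma ofReal_one_sub_inv_le_gaussianMatrix (hr : r ≠ 0) (hv : v ≠ 0)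
    (X : Matrix (Fin n) (Fin p) ℝ) {V₀ : Matrix (Fin m) (Fin r) ℝ} (hV₀ : V₀ᵀ * V₀ = 1) :
    ENNReal.ofReal (1 - 1 / p) ≤ gaussianMatrix n m v
      {z | ∀ j, l2norm ((Xᵀ * (z * V₀)) j) ≤ √v * l2norm (Xᵀ j) * (√r + √(4 * Real.log p))} := by
  set μ := gaussianMatrix n m v
  set t : ℝ := √(4 * Real.log p)
  set good : Set (Matrix (Fin n) (Fin m) ℝ) :=
    {z | ∀ j, l2norm ((Xᵀ * (z * V₀)) j) ≤ √v * l2norm (Xᵀ j) * (√r + t)}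
  set bad : Fin p → Set (Matrix (Fin n) (Fin m) ℝ) :=
    fun j => {z | √v * l2norm (Xᵀ j) * (√r + t) < l2norm (Xᵀ j ᵥ* (z * V₀))}
  have hbad (j : Fin p) : μ.real (bad j) ≤ 1 / (p : ℝ) ^ 2 := by
    have hp : (1 : ℝ) ≤ p := Nat.one_le_cast.2 (Fin.pos j)
    have hexp : Real.exp (-(t ^ 2 / 2)) = 1 / (p : ℝ) ^ 2 := by
      rw [Real.sq_sqrt (mul_nonneg zero_le_four (Real.log_nonneg hp)), Real.exp_neg, one_div,
        ← Real.exp_log (show (0 : ℝ) < p by linarith), ← Real.exp_nat_mul, Real.log_exp]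
      congr 2
      push_cast
      ring
    rw [← hexp]
    exact gaussianMatrix_l2norm_vecMul_mul_gt_le hr hv _ hV₀ (Real.sqrt_nonneg _)
  have hcover : univ ⊆ good ∪ ⋃ j, bad j := by
    intro z _
    rw [mem_union, mem_iUnion, or_iff_not_imp_right, not_exists]
    exact fun hz j => not_lt.1 (hz j)
  have hbad_sum : ∑ j, μ.real (bad j) ≤ 1 / p := by
    refine (Finset.sum_le_sum fun j _ => hbad j).trans_eq ?_
    rw [Finset.sum_const, Finset.card_univ, Fintype.card_fin, nsmul_eq_mul]
    field_simp
  have hunion : 1 ≤ μ.real good + ∑ j, μ.real (bad j) := by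
    calc 1 = μ.real univ := probReal_univ.symm
      _ ≤ μ.real (good ∪ ⋃ j, bad j) := measureReal_mono hcover
      _ ≤ μ.real good + μ.real (⋃ j, bad j) := measureReal_union_le _ _
      _ ≤ _ := by gcongr; exact measureReal_iUnion_fintype_le _
  rw [← ofReal_measureReal (μ := μ)]
  exact ENNReal.ofReal_le_ofReal (by linarith)

lemma ofReal_one_sub_inv_le_gaussianMatrix_of_le {σ lam : ℝ} (hr : r ≠ 0) (hσ : 0 < σ)
    {X : Matrix (Fin n) (Fin p) ℝ} {V₀ : Matrix (Fin m) (Fin r) ℝ} (hV₀ : V₀ᵀ * V₀ = 1)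
    (hlam : ∀ j, 4 * σ * l2norm (Xᵀ j) * (√r + √(4 * Real.log p)) ≤ lam) :
    ENNReal.ofReal (1 - 1 / p) ≤ gaussianMatrix n m (Real.toNNReal ((2 * σ) ^ 2))
      {z | ∀ j, l2norm ((Xᵀ * (z * V₀)) j) ≤ lam / 2} := by
  have hv : √((Real.toNNReal ((2 * σ) ^ 2) : ℝ≥0) : ℝ) = 2 * σ := by
    rw [Real.coe_toNNReal _ (sq_nonneg _), Real.sqrt_sq (by positivity)]
  refine (ofReal_one_sub_inv_le_gaussianMatrix hr (by positivity) X hV₀).trans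
    (measure_mono fun z hz j => (hz j).trans ?_)
  rw [hv]
  linarith [hlam j]

end GaussianMatrix

section RowSupport

variable {I J : Type*}

open Classical in
/-- The matrix `D` with the rows outside `T` replaced by zero, written `D_T` in the theory of
sparse estimation. -/
def rowRestrict (T : Finset I) (D : Matrix I J ℝ) : Matrix I J ℝ :=
  fun i => if i ∈ T then D i else 0

lemma rowRestrict_apply_of_mem {T : Finset I} {i : I} (hi : i ∈ T) (D : Matrix I J ℝ) :
    rowRestrict T D i = D i :=
  if_pos hi

lemma rowRestrict_apply_of_notMem {T : Finset I} {i : I} (hi : i ∉ T) (D : Matrix I J ℝ) :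
    rowRestrict T D i = 0 :=
  if_neg hi

variable [Fintype I] [Fintype J]

lemma mem_rowSupport {M : Matrix I J ℝ} {i : I} : i ∈ rowSupport M ↔ M i ≠ 0 := by
  simp [rowSupport]

lemma apply_eq_zero_of_notMem_rowSupport {M : Matrix I J ℝ} {i : I} (hi : i ∉ rowSupport M) :
    M i = 0 :=
  not_not.1 (mt mem_rowSupport.2 hi)

lemma rowSupport_add_subset [DecidableEq I] (M N : Matrix I J ℝ) :
    rowSupport (M + N) ⊆ rowSupport M ∪ rowSupport N := by
  intro i hi
  contrapose! hi
  rw [Finset.mem_union, not_or] at hi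
  rw [mem_rowSupport, not_not, show (M + N) i = M i + N i from rfl,
    apply_eq_zero_of_notMem_rowSupport hi.1, apply_eq_zero_of_notMem_rowSupport hi.2, add_zero]

lemma rowSupport_smul_subset (c : ℝ) (M : Matrix I J ℝ) : rowSupport (c • M) ⊆ rowSupport M := by
  intro i hi
  contrapose! hi
  rw [mem_rowSupport, not_not, show (c • M) i = c • M i from rfl,
    apply_eq_zero_of_notMem_rowSupport hi, smul_zero]

lemma trace_transpose_mul_eq_zero_of_disjoint_rowSupport {M N : Matrix I J ℝ}
    (h : Disjoint (rowSupport M) (rowSupport N)) : (Mᵀ * N).trace = 0 := by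
  rw [trace_transpose_mul_eq_sum_row]
  refine Finset.sum_eq_zero fun i _ => ?_
  by_cases hi : i ∈ rowSupport M
  · rw [apply_eq_zero_of_notMem_rowSupport (Finset.disjoint_left.1 h hi), dotProduct_zero]
  · rw [apply_eq_zero_of_notMem_rowSupport hi, zero_dotProduct]

lemma rowSupport_rowRestrict_subset (T : Finset I) (D : Matrix I J ℝ) :
    rowSupport (rowRestrict T D) ⊆ T := fun _ hi => by
  contrapose! hi
  rw [mem_rowSupport, not_not, rowRestrict_apply_of_notMem hi]

lemma frobNorm_rowRestrict_sq (T : Finset I) (D : Matrix I J ℝ) :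
    frobNorm (rowRestrict T D) ^ 2 = ∑ i ∈ T, l2norm (D i) ^ 2 := by
  rw [frobNorm_sq_eq_sum_row, ← Finset.sum_subset (Finset.subset_univ T)]
  · exact Finset.sum_congr rfl fun i hi => by rw [rowRestrict_apply_of_mem hi]
  · intro i _ hi
    rw [rowRestrict_apply_of_notMem hi, l2norm_zero, sq, zero_mul]

lemma frobNorm_rowRestrict_mono {S T : Finset I} (hST : S ⊆ T) (D : Matrix I J ℝ) :
    frobNorm (rowRestrict S D) ≤ frobNorm (rowRestrict T D) := by
  refine le_of_sq_le_sq ?_ (frobNorm_nonneg _)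
  rw [frobNorm_rowRestrict_sq, frobNorm_rowRestrict_sq]
  exact Finset.sum_le_sum_of_subset_of_nonneg hST fun i _ _ => sq_nonneg _

end RowSupport

section SparseRiesz

variable {n p r k : ℕ} {X : Matrix (Fin n) (Fin p) ℝ}

/-- The values `‖X v‖²` over the unit vectors `v` supported on some set of exactly `k`
coordinates; `κ₋²(k)` and `κ₊²(k)` are its extreme values. -/
def sparseRayleighSet (X : Matrix (Fin n) (Fin p) ℝ) (k : ℕ) : Set ℝ :=
  {t | ∃ B : Finset (Fin p), B.card = k ∧ ∃ v : Fin p → ℝ,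
    (∀ i, i ∉ B → v i = 0) ∧ l2norm v = 1 ∧ t = l2norm (X *ᵥ v) ^ 2}

lemma div_l2norm_sq_mem_sparseRayleighSet (hk : k ≤ p) {v : Fin p → ℝ} (hv : v ≠ 0)
    {B : Finset (Fin p)} (hB : B.card ≤ k) (hvB : ∀ i ∉ B, v i = 0) :
    l2norm (X *ᵥ v) ^ 2 / l2norm v ^ 2 ∈ sparseRayleighSet X k := by
  obtain ⟨B', hBB', hB'⟩ := Finset.exists_superset_card_eq hB (by simpa using hk)
  refine ⟨B', hB', (l2norm v)⁻¹ • v, fun i hi => ?_, l2norm_inv_smul_self hv, ?_⟩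
  · simp [hvB i (mt (@hBB' i) hi)]
  · rw [mulVec_smul, l2norm_smul, mul_pow, sq_abs, inv_pow, div_eq_inv_mul]

lemma bddBelow_sparseRayleighSet : BddBelow (sparseRayleighSet X k) :=
  ⟨0, by rintro _ ⟨_, _, v, _, _, rfl⟩; exact sq_nonneg _⟩

lemma bddAbove_sparseRayleighSet : BddAbove (sparseRayleighSet X k) := by
  refine ⟨frobNorm X ^ 2, ?_⟩
  rintro _ ⟨_, _, v, _, hv, rfl⟩
  have := l2norm_mulVec_le_frobNorm_mul X v
  rw [hv, mul_one] at this
  exact pow_le_pow_left₀ (l2norm_nonneg _) this 2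

lemma kappaMinusSq_nonneg : 0 ≤ kappaMinusSq X k :=
  Real.sInf_nonneg (by rintro _ ⟨_, _, v, _, _, rfl⟩; exact sq_nonneg _)

lemma kappaPlusSq_nonneg : 0 ≤ kappaPlusSq X k :=
  Real.sSup_nonneg (by rintro _ ⟨_, _, v, _, _, rfl⟩; exact sq_nonneg _)

lemma kappaMinus_sq : kappaMinus X k ^ 2 = kappaMinusSq X k := Real.sq_sqrt kappaMinusSq_nonneg

lemma kappaPlus_sq : kappaPlus X k ^ 2 = kappaPlusSq X k := Real.sq_sqrt kappaPlusSq_nonneg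

lemma kappaMinus_nonneg : 0 ≤ kappaMinus X k := Real.sqrt_nonneg _

lemma kappaPlus_nonneg : 0 ≤ kappaPlus X k := Real.sqrt_nonneg _

lemma kappaMinusSq_eq_zero_of_lt (hk : p < k) : kappaMinusSq X k = 0 := by
  have hempty : sparseRayleighSet X k = ∅ := by
    refine eq_empty_of_forall_notMem ?_
    rintro _ ⟨B, hB, _⟩
    exact (hB ▸ hk).not_ge (card_finset_fin_le B)
  exact (congrArg sInf hempty).trans Real.sInf_empty

lemma le_of_kappaMinus_pos (h : 0 < kappaMinus X k) : k ≤ p := by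
  by_contra! hk
  exact h.ne' (by rw [kappaMinus, kappaMinusSq_eq_zero_of_lt hk, Real.sqrt_zero])

lemma kappaMinusSq_mul_l2norm_sq_le {v : Fin p → ℝ} {B : Finset (Fin p)} (hB : B.card ≤ k)
    (hvB : ∀ i ∉ B, v i = 0) : kappaMinusSq X k * l2norm v ^ 2 ≤ l2norm (X *ᵥ v) ^ 2 := by
  rcases lt_or_ge p k with hk | hk
  · rw [kappaMinusSq_eq_zero_of_lt hk, zero_mul]
    exact sq_nonneg _
  rcases eq_or_ne v 0 with rfl | hv
  · simp [l2norm_zero]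
  rw [← le_div_iff₀ (pow_pos (l2norm_pos hv) 2)]
  exact csInf_le bddBelow_sparseRayleighSet (div_l2norm_sq_mem_sparseRayleighSet hk hv hB hvB)

lemma l2norm_mulVec_sq_le_kappaPlusSq_mul (hk : k ≤ p) {v : Fin p → ℝ} {B : Finset (Fin p)}
    (hB : B.card ≤ k) (hvB : ∀ i ∉ B, v i = 0) :
    l2norm (X *ᵥ v) ^ 2 ≤ kappaPlusSq X k * l2norm v ^ 2 := by
  rcases eq_or_ne v 0 with rfl | hv
  · simp [l2norm_zero]
  rw [← div_le_iff₀ (pow_pos (l2norm_pos hv) 2)]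
  exact le_csSup bddAbove_sparseRayleighSet (div_l2norm_sq_mem_sparseRayleighSet hk hv hB hvB)

lemma kappaMinusSq_le_kappaPlusSq {l : ℕ} (hk0 : k ≠ 0) (hk : k ≤ p) (hkl : k ≤ l) :
    kappaMinusSq X l ≤ kappaPlusSq X k := by
  let j : Fin p := ⟨0, by lia⟩
  have hsupp : ∀ i ∉ ({j} : Finset (Fin p)), (Pi.single j 1 : Fin p → ℝ) i = 0 := fun i hi =>
    Pi.single_eq_of_ne (Finset.notMem_singleton.1 hi) 1
  have hunit : l2norm (Pi.single j 1 : Fin p → ℝ) = 1 := by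
    rw [l2norm_eq_norm_toLp]
    simp
  have hlower := kappaMinusSq_mul_l2norm_sq_le (X := X) (k := l) (by simp; lia) hsupp
  have hupper := l2norm_mulVec_sq_le_kappaPlusSq_mul (X := X) hk (by simp; lia) hsupp
  rw [hunit, one_pow, mul_one] at hlower hupper
  exact hlower.trans hupper

lemma kappaMinusSq_mul_frobNorm_sq_le {M : Matrix (Fin p) (Fin r) ℝ}
    (hM : (rowSupport M).card ≤ k) :
    kappaMinusSq X k * frobNorm M ^ 2 ≤ frobNorm (X * M) ^ 2 := by
  rw [frobNorm_sq_eq_sum_col, frobNorm_sq_eq_sum_col, Finset.mul_sum]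
  exact Finset.sum_le_sum fun j _ => kappaMinusSq_mul_l2norm_sq_le hM fun i hi =>
    congrFun (apply_eq_zero_of_notMem_rowSupport hi) j

lemma frobNorm_mul_sq_le_kappaPlusSq_mul (hk : k ≤ p) {M : Matrix (Fin p) (Fin r) ℝ}
    (hM : (rowSupport M).card ≤ k) :
    frobNorm (X * M) ^ 2 ≤ kappaPlusSq X k * frobNorm M ^ 2 := by
  rw [frobNorm_sq_eq_sum_col, frobNorm_sq_eq_sum_col, Finset.mul_sum]
  exact Finset.sum_le_sum fun j _ => l2norm_mulVec_sq_le_kappaPlusSq_mul hk hM fun i hi =>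
    congrFun (apply_eq_zero_of_notMem_rowSupport hi) j

lemma abs_trace_transpose_mul_le_of_disjoint_rowSupport (hk0 : k ≠ 0) (hk : k ≤ p)
    {M N : Matrix (Fin p) (Fin r) ℝ} (hM : (rowSupport M).card ≤ k) (hN : (rowSupport N).card ≤ k)
    (hMN : Disjoint (rowSupport M) (rowSupport N)) :
    |((X * M)ᵀ * (X * N)).trace| ≤
      (kappaPlusSq X k - kappaMinusSq X (2 * k)) * (frobNorm M * frobNorm N) := by
  set δ := kappaPlusSq X k - kappaMinusSq X (2 * k) with hδ
  set c := ((X * M)ᵀ * (X * N)).trace with hc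
  have hδ0 : 0 ≤ δ := sub_nonneg.2 (kappaMinusSq_le_kappaPlusSq hk0 hk (by lia))
  -- Compare `κ₋²(2k) ‖M + tN‖² ≤ ‖X (M + tN)‖²` with the `κ₊²(k)` bounds on `‖X M‖` and `‖X N‖`.
  have hquad (t : ℝ) : 0 ≤ δ * frobNorm N ^ 2 * (t * t) + 2 * c * t + δ * frobNorm M ^ 2 := by
    have hcard : (rowSupport (M + t • N)).card ≤ 2 * k := by
      have := (Finset.card_le_card (rowSupport_add_subset M (t • N))).trans
        (Finset.card_union_le _ _)
      have := Finset.card_le_card (rowSupport_smul_subset t N)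
      lia
    have hlower := kappaMinusSq_mul_frobNorm_sq_le (X := X) hcard
    have hupperM := frobNorm_mul_sq_le_kappaPlusSq_mul (X := X) hk hM
    have hupperN := mul_le_mul_of_nonneg_left
      (frobNorm_mul_sq_le_kappaPlusSq_mul (X := X) hk hN) (sq_nonneg t)
    rw [Matrix.mul_add, Matrix.mul_smul, frobNorm_add_sq, frobNorm_add_sq, Matrix.mul_smul,
      Matrix.mul_smul, trace_smul, trace_smul, frobNorm_smul_sq, frobNorm_smul_sq,
      trace_transpose_mul_eq_zero_of_disjoint_rowSupport hMN, ← hc, smul_eq_mul, smul_eq_mul]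
      at hlower
    rw [hδ]
    linarith
  have hdiscrim := discrim_le_zero hquad
  rw [discrim] at hdiscrim
  refine abs_le_of_sq_le_sq ?_ (by have := frobNorm_nonneg M; have := frobNorm_nonneg N; positivity)
  linarith

end SparseRiesz

section Shelling

variable {ι : Type*}

lemma exists_subset_card_eq_forall_le [DecidableEq ι] (f : ι → ℝ) {q : ℕ} {R : Finset ι}
    (hq : q ≤ R.card) : ∃ T ⊆ R, T.card = q ∧ ∀ i ∈ T, ∀ j ∈ R \ T, f j ≤ f i := by
  induction q generalizing R with
  | zero => exact ⟨∅, by simp⟩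
  | succ q ih =>
    obtain ⟨i₀, hi₀, hmax⟩ := R.exists_max_image f (Finset.card_pos.1 (by lia))
    obtain ⟨T, hTR, hT, htop⟩ := ih (R := R.erase i₀) (by grind)
    refine ⟨insert i₀ T, ?_, ?_, ?_⟩ <;> grind

lemma sqrt_sum_sq_le_sum_div_sqrt {f : ι → ℝ} (hf : ∀ i, 0 ≤ f i) {q : ℕ} (hq : q ≠ 0)
    {S T : Finset ι} (hS : S.card ≤ q) (hT : T.card = q) (hST : ∀ i ∈ T, ∀ j ∈ S, f j ≤ f i) :
    √(∑ j ∈ S, f j ^ 2) ≤ (∑ i ∈ T, f i) / √q := by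
  have hq0 : (0 : ℝ) < q := by positivity
  obtain ⟨i₀, hi₀, hmin⟩ := T.exists_min_image f (Finset.card_pos.1 (by lia))
  have hsum_sq : ∑ j ∈ S, f j ^ 2 ≤ q * f i₀ ^ 2 :=
    calc ∑ j ∈ S, f j ^ 2 ≤ S.card • f i₀ ^ 2 :=
          Finset.sum_le_card_nsmul _ _ _ fun j hj => pow_le_pow_left₀ (hf j) (hST i₀ hi₀ j hj) 2
      _ ≤ q * f i₀ ^ 2 := by rw [nsmul_eq_mul]; gcongr
  have hsum : q * f i₀ ≤ ∑ i ∈ T, f i := by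
    rw [← hT, ← nsmul_eq_mul]
    exact Finset.card_nsmul_le_sum _ _ _ hmin
  rw [le_div_iff₀ (Real.sqrt_pos.2 hq0)]
  calc √(∑ j ∈ S, f j ^ 2) * √q ≤ √(q * f i₀ ^ 2) * √q := by gcongr
    _ = q * f i₀ := by
      rw [Real.sqrt_mul hq0.le, Real.sqrt_sq (hf i₀), mul_right_comm, Real.mul_self_sqrt hq0.le]
    _ ≤ ∑ i ∈ T, f i := hsum

/-- Blocks of `q` indices are cut off in decreasing order of `f`; the `ℓ₂` norm of each block is at
most `√q` times the least entry of the block before it, hence is controlled by the `ℓ₁` norm of the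
latter. -/
lemma exists_finpartition_sdiff_sum_sqrt_le [DecidableEq ι] {f : ι → ℝ} (hf : ∀ i, 0 ≤ f i)
    {q : ℕ} (hq : q ≠ 0) (R : Finset ι) :
    ∃ T ⊆ R, T.card = min q R.card ∧ ∃ P : Finpartition (R \ T), (∀ B ∈ P.parts, B.card ≤ q) ∧
      ∑ B ∈ P.parts, √(∑ i ∈ B, f i ^ 2) ≤ (∑ i ∈ R, f i) / √q := by
  induction R using Finset.strongInduction with
  | H R ih =>
  rcases le_or_gt R.card q with hRq | hRq
  · refine ⟨R, subset_rfl, (min_eq_right hRq).symm,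
      (Finpartition.empty _).copy (Finset.sdiff_self R).symm, by simp, ?_⟩
    simpa using div_nonneg (Finset.sum_nonneg fun i _ => hf i) (Real.sqrt_nonneg q)
  obtain ⟨T, hTR, hT, htop⟩ := exists_subset_card_eq_forall_le f hRq.le
  have hcard : (R \ T).card = R.card - q := by rw [Finset.card_sdiff_of_subset hTR, hT]
  obtain ⟨T', hT'R, hT', P, hPq, hP⟩ :=
    ih (R \ T) (Finset.sdiff_ssubset hTR (Finset.card_pos.1 (by lia)))
  have hT'0 : T' ≠ ⊥ := (Finset.card_pos.1 (by lia)).ne_empty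
  refine ⟨T, hTR, by lia, P.extend hT'0 Finset.sdiff_disjoint (sdiff_sup_cancel hT'R), ?_, ?_⟩
  · rw [Finpartition.extend_parts, Finset.forall_mem_insert]
    exact ⟨by lia, hPq⟩
  have hT'P : T' ∉ P.parts := fun h =>
    hT'0 (Finset.sdiff_disjoint.mono_left (P.le h)).eq_bot_of_self
  rw [Finpartition.extend_parts, Finset.sum_insert hT'P, ← Finset.sum_sdiff hTR, add_div, add_comm]
  exact add_le_add hP (sqrt_sum_sq_le_sum_div_sqrt hf hq (by lia) hT fun i hi j hj =>
    htop i hi j (hT'R hj))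

end Shelling

section RestrictedEigenvalue

variable {n p r s k : ℕ} {X : Matrix (Fin n) (Fin p) ℝ} {S : Finset (Fin p)}

lemma sum_parts_rowRestrict {I J : Type*} [DecidableEq I] {T : Finset I} (P : Finpartition T)
    (D : Matrix I J ℝ) : ∑ B ∈ P.parts, rowRestrict B D = rowRestrict T D := by
  ext i j
  rw [Matrix.sum_apply]
  by_cases hi : i ∈ T
  · rw [Finset.sum_eq_single_of_mem _ (P.part_mem.2 hi) fun B hB hBi => ?_,
      rowRestrict_apply_of_mem (P.mem_part hi), rowRestrict_apply_of_mem hi]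
    rw [rowRestrict_apply_of_notMem fun hiB => hBi (P.part_eq_of_mem hB hiB).symm, Pi.zero_apply]
  · rw [rowRestrict_apply_of_notMem hi, Pi.zero_apply]
    refine Finset.sum_eq_zero fun B hB => ?_
    rw [rowRestrict_apply_of_notMem fun hiB => hi (P.le hB hiB), Pi.zero_apply]

lemma rowRestrict_add_rowRestrict_compl {I J : Type*} [Fintype I] [DecidableEq I] (T : Finset I)
    (D : Matrix I J ℝ) : rowRestrict T D + rowRestrict Tᶜ D = D := by
  ext i j
  by_cases hi : i ∈ T
  · rw [Matrix.add_apply, rowRestrict_apply_of_mem hi, rowRestrict_apply_of_notMem (by simpa),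
      Pi.zero_apply, add_zero]
  · rw [Matrix.add_apply, rowRestrict_apply_of_notMem hi, rowRestrict_apply_of_mem (by simpa),
      Pi.zero_apply, zero_add]

lemma frobNorm_rowRestrict {I J : Type*} [Fintype I] [Fintype J] (T : Finset I)
    (D : Matrix I J ℝ) : frobNorm (rowRestrict T D) = √(∑ i ∈ T, l2norm (D i) ^ 2) := by
  rw [← frobNorm_rowRestrict_sq, Real.sqrt_sq (frobNorm_nonneg _)]

lemma sum_l2norm_le_sqrt_mul_frobNorm_rowRestrict {I J : Type*} [Fintype I] [Fintype J]
    {T : Finset I} (hT : T.card ≤ s) (D : Matrix I J ℝ) :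
    ∑ i ∈ T, l2norm (D i) ≤ √s * frobNorm (rowRestrict T D) := by
  have hcauchy := Real.sum_mul_le_sqrt_mul_sqrt T (fun _ => 1) (fun i => l2norm (D i))
  simp only [one_mul, one_pow, Finset.sum_const, nsmul_eq_mul, mul_one] at hcauchy
  rw [frobNorm_rowRestrict]
  exact hcauchy.trans (by gcongr)

/-- Condition SE in the form in which it is used for `s`-sparse targets: the near-orthogonality gap
`κ₊²(k) - κ₋²(2k)` is small relative to `κ₋²(k) √((k - s) / s)`. -/
structure SparseEigenvalueCondition (X : Matrix (Fin n) (Fin p) ℝ) (s k : ℕ) : Prop where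
  lt : s < k
  kappaMinus_pos : 0 < kappaMinus X k
  gap_le : 6 * √s * (kappaPlusSq X k - kappaMinusSq X (2 * k)) ≤ √(k - s : ℕ) * kappaMinusSq X k

lemma sparseEigenvalueCondition_of_div_lt {c : ℝ} (hs : s ≠ 0) (hsk : 2 * s ≤ k)
    (hX : 0 < kappaMinus X k) (hc : 6 * c ≤ √((k : ℝ) / s - 1))
    (hgap : (kappaPlusSq X k - kappaMinusSq X (2 * k)) / kappaMinusSq X k < c) :
    SparseEigenvalueCondition X s k where
  lt := by lia
  kappaMinus_pos := hX
  gap_le := by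
    have hs0 : (0 : ℝ) < s := by positivity
    have hdiv : (k : ℝ) / s - 1 = (k - s : ℕ) / s := by
      rw [Nat.cast_sub (by lia), sub_div, div_self hs0.ne']
    rw [hdiv, Real.sqrt_div (by positivity), le_div_iff₀ (Real.sqrt_pos.2 hs0)] at hc
    rw [← kappaMinus_sq (k := k), div_lt_iff₀ (by positivity)] at hgap
    rw [← kappaMinus_sq (k := k)]
    calc 6 * √s * (kappaPlusSq X k - kappaMinusSq X (2 * k))
        ≤ 6 * √s * (c * kappaMinus X k ^ 2) := by gcongr
      _ = 6 * c * √s * kappaMinus X k ^ 2 := by ring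
      _ ≤ √(k - s : ℕ) * kappaMinus X k ^ 2 := by gcongr

lemma exists_superset_abs_trace_rowRestrict_compl_le (hsk : s < k) (hk : k ≤ p) (hS : S.card ≤ s)
    (D : Matrix (Fin p) (Fin r) ℝ) :
    ∃ T, S ⊆ T ∧ T.card ≤ k ∧
      |((X * rowRestrict T D)ᵀ * (X * rowRestrict Tᶜ D)).trace| ≤
        (kappaPlusSq X k - kappaMinusSq X (2 * k)) * frobNorm (rowRestrict T D) *
          ((∑ i ∈ Sᶜ, l2norm (D i)) / √(k - s : ℕ)) := by
  obtain ⟨T, -, hT, P, hPcard, hP⟩ := exists_finpartition_sdiff_sum_sqrt_le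
    (fun i => l2norm_nonneg (D i)) (Nat.sub_ne_zero_of_lt hsk) Sᶜ
  have hcompl : (S ∪ T)ᶜ = Sᶜ \ T := by rw [Finset.compl_union, Finset.sdiff_eq_inter_compl]
  have hcard : (S ∪ T).card ≤ k := (Finset.card_union_le _ _).trans (by lia)
  refine ⟨S ∪ T, Finset.subset_union_left, hcard, ?_⟩
  have hgap : 0 ≤ kappaPlusSq X k - kappaMinusSq X (2 * k) :=
    sub_nonneg.2 (kappaMinusSq_le_kappaPlusSq (by lia) hk (by lia))
  have hblock (B) (hB : B ∈ P.parts) :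
      |((X * rowRestrict (S ∪ T) D)ᵀ * (X * rowRestrict B D)).trace| ≤
        (kappaPlusSq X k - kappaMinusSq X (2 * k)) *
          (frobNorm (rowRestrict (S ∪ T) D) * √(∑ i ∈ B, l2norm (D i) ^ 2)) := by
    have hdisj : Disjoint (S ∪ T) B :=
      disjoint_compl_right.mono_right (hcompl ▸ P.le hB)
    rw [← frobNorm_rowRestrict]
    exact abs_trace_transpose_mul_le_of_disjoint_rowSupport (by lia) hk
      ((Finset.card_le_card (rowSupport_rowRestrict_subset _ _)).trans hcard)
      ((Finset.card_le_card (rowSupport_rowRestrict_subset _ _)).trans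
        ((hPcard B hB).trans (k.sub_le s)))
      (hdisj.mono (rowSupport_rowRestrict_subset _ _) (rowSupport_rowRestrict_subset _ _))
  rw [hcompl, ← sum_parts_rowRestrict P, Matrix.mul_sum, Matrix.mul_sum, trace_sum]
  calc _ ≤ ∑ B ∈ P.parts, _ := (Finset.abs_sum_le_sum_abs _ _).trans (Finset.sum_le_sum hblock)
    _ = (kappaPlusSq X k - kappaMinusSq X (2 * k)) * frobNorm (rowRestrict (S ∪ T) D) *
          ∑ B ∈ P.parts, √(∑ i ∈ B, l2norm (D i) ^ 2) := by
      rw [← Finset.mul_sum, ← Finset.mul_sum, mul_assoc]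
    _ ≤ _ := mul_le_mul_of_nonneg_left hP (mul_nonneg hgap (frobNorm_nonneg _))

namespace SparseEigenvalueCondition

lemma le_card (hX : SparseEigenvalueCondition X s k) : k ≤ p :=
  le_of_kappaMinus_pos hX.kappaMinus_pos

lemma exists_superset_abs_trace_le_of_cone (hX : SparseEigenvalueCondition X s k)
    (hS : S.card ≤ s) {D : Matrix (Fin p) (Fin r) ℝ}
    (hD : ∑ i ∈ Sᶜ, l2norm (D i) ≤ 3 * ∑ i ∈ S, l2norm (D i)) :
    ∃ T, S ⊆ T ∧ T.card ≤ k ∧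
      |((X * rowRestrict T D)ᵀ * (X * rowRestrict Tᶜ D)).trace| ≤
        kappaMinusSq X k / 2 * frobNorm (rowRestrict T D) ^ 2 := by
  obtain ⟨T, hST, hT, htrace⟩ :=
    exists_superset_abs_trace_rowRestrict_compl_le (X := X) hX.lt hX.le_card hS D
  refine ⟨T, hST, hT, htrace.trans ?_⟩
  have hq : 0 < √(k - s : ℕ) := Real.sqrt_pos.2 (by exact_mod_cast Nat.sub_pos_of_lt hX.lt)
  have hgap : 0 ≤ kappaPlusSq X k - kappaMinusSq X (2 * k) :=
    sub_nonneg.2 (kappaMinusSq_le_kappaPlusSq (by have := hX.lt; lia) hX.le_card (by lia))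
  set x := frobNorm (rowRestrict T D)
  have hx : 0 ≤ x := frobNorm_nonneg _
  have htail : ∑ i ∈ Sᶜ, l2norm (D i) ≤ 3 * (√s * x) := hD.trans <| by
    gcongr
    exact (sum_l2norm_le_sqrt_mul_frobNorm_rowRestrict hS D).trans
      (mul_le_mul_of_nonneg_left (frobNorm_rowRestrict_mono hST D) (Real.sqrt_nonneg _))
  rw [mul_div_assoc', div_le_iff₀ hq]
  calc (kappaPlusSq X k - kappaMinusSq X (2 * k)) * x * ∑ i ∈ Sᶜ, l2norm (D i)
      ≤ (kappaPlusSq X k - kappaMinusSq X (2 * k)) * x * (3 * (√s * x)) := by gcongr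
    _ = 6 * √s * (kappaPlusSq X k - kappaMinusSq X (2 * k)) * (x ^ 2 / 2) := by ring
    _ ≤ √(k - s : ℕ) * kappaMinusSq X k * (x ^ 2 / 2) :=
      mul_le_mul_of_nonneg_right hX.gap_le (by positivity)
    _ = kappaMinusSq X k / 2 * x ^ 2 * √(k - s : ℕ) := by ring

lemma kappaMinusSq_mul_frobNorm_rowRestrict_le_of_cone (hX : SparseEigenvalueCondition X s k)
    (hS : S.card ≤ s) {D : Matrix (Fin p) (Fin r) ℝ}
    (hD : ∑ i ∈ Sᶜ, l2norm (D i) ≤ 3 * ∑ i ∈ S, l2norm (D i)) :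
    kappaMinusSq X k * frobNorm (rowRestrict S D) ≤ 2 * kappaPlus X k * frobNorm (X * D) := by
  obtain ⟨T, hST, hT, htrace⟩ := hX.exists_superset_abs_trace_le_of_cone hS hD
  have hcard : (rowSupport (rowRestrict T D)).card ≤ k :=
    (Finset.card_le_card (rowSupport_rowRestrict_subset T D)).trans hT
  set x := frobNorm (rowRestrict T D)
  set y := frobNorm (X * rowRestrict T D) with hy
  have hx0 : 0 ≤ x := frobNorm_nonneg _
  have hlower : kappaMinusSq X k * x ^ 2 ≤ y ^ 2 := kappaMinusSq_mul_frobNorm_sq_le hcard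
  have hupper : y ≤ kappaPlus X k * x := by
    refine le_of_sq_le_sq ?_ (mul_nonneg kappaPlus_nonneg hx0)
    rw [mul_pow, kappaPlus_sq]
    exact frobNorm_mul_sq_le_kappaPlusSq_mul hX.le_card hcard
  have hsplit : ((X * rowRestrict T D)ᵀ * (X * D)).trace =
      y ^ 2 + ((X * rowRestrict T D)ᵀ * (X * rowRestrict Tᶜ D)).trace := by
    rw [hy, frobNorm_sq_eq_trace, ← trace_add, ← Matrix.mul_add, ← Matrix.mul_add,
      rowRestrict_add_rowRestrict_compl]
  have hxle : kappaMinusSq X k * x ≤ 2 * kappaPlus X k * frobNorm (X * D) := by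
    rcases hx0.eq_or_lt with hx0 | hx0
    · rw [← hx0, mul_zero]
      exact mul_nonneg (mul_nonneg two_pos.le kappaPlus_nonneg) (frobNorm_nonneg _)
    refine le_of_mul_le_mul_right ?_ hx0
    have hcauchy := trace_transpose_mul_le (X * rowRestrict T D) (X * D)
    have hmul := mul_le_mul_of_nonneg_right hupper (frobNorm_nonneg (X * D))
    have := neg_le_of_abs_le htrace
    linarith
  exact (mul_le_mul_of_nonneg_left (frobNorm_rowRestrict_mono hST D) kappaMinusSq_nonneg).trans hxle

end SparseEigenvalueCondition

end RestrictedEigenvalue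

section GroupLasso

variable {I J : Type*} [Fintype I] [Fintype J]

lemma trace_transpose_mul_le_mul_norm21 {M : Matrix I J ℝ} {c : ℝ} (hM : ∀ i, l2norm (M i) ≤ c)
    (D : Matrix I J ℝ) : (Mᵀ * D).trace ≤ c * norm21 D := by
  rw [trace_transpose_mul_eq_sum_row, norm21, Finset.mul_sum]
  exact Finset.sum_le_sum fun i _ => (dotProduct_le_l2norm_mul_l2norm _ _).trans
    (mul_le_mul_of_nonneg_right (hM i) (l2norm_nonneg _))

lemma norm21_add_sum_compl_le [DecidableEq I] {M : Matrix I J ℝ} {S : Finset I}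
    (hM : ∀ i ∉ S, M i = 0) (D : Matrix I J ℝ) :
    norm21 M + ∑ i ∈ Sᶜ, l2norm (D i) ≤ norm21 (M + D) + ∑ i ∈ S, l2norm (D i) := by
  have hoff : ∑ i ∈ Sᶜ, l2norm ((M + D) i) = ∑ i ∈ Sᶜ, l2norm (D i) :=
    Finset.sum_congr rfl fun i hi => by
      rw [show (M + D) i = M i + D i from rfl, hM i (Finset.mem_compl.1 hi), zero_add]
  have hoffM : ∑ i ∈ Sᶜ, l2norm (M i) = 0 := Finset.sum_eq_zero fun i hi => by
    rw [hM i (Finset.mem_compl.1 hi), l2norm_zero]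
  have hon : ∑ i ∈ S, l2norm (M i) ≤ ∑ i ∈ S, l2norm ((M + D) i) + ∑ i ∈ S, l2norm (D i) := by
    rw [← Finset.sum_add_distrib]
    refine Finset.sum_le_sum fun i _ => ?_
    calc l2norm (M i) = l2norm ((M + D) i + -D i) := by
          rw [show (M + D) i = M i + D i from rfl, add_neg_cancel_right]
      _ ≤ l2norm ((M + D) i) + l2norm (D i) := (l2norm_add_le _ _).trans_eq (by rw [l2norm_neg])
  rw [norm21, norm21, ← Finset.sum_add_sum_compl S, ← Finset.sum_add_sum_compl S]
  linarith

variable {n p r s k : ℕ} {X : Matrix (Fin n) (Fin p) ℝ} {W : Matrix (Fin n) (Fin r) ℝ}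
  {B B₀ : Matrix (Fin p) (Fin r) ℝ} {lam : ℝ}

/-- `B` is a solution of the group lasso problem with response `Y`, design `X` and penalty level
`lam`. -/
def IsGroupLasso (X : Matrix (Fin n) (Fin p) ℝ) (Y : Matrix (Fin n) (Fin r) ℝ) (lam : ℝ)
    (B : Matrix (Fin p) (Fin r) ℝ) : Prop :=
  ∀ B' : Matrix (Fin p) (Fin r) ℝ, frobNorm (Y - X * B) ^ 2 / 2 + lam * norm21 B ≤
    frobNorm (Y - X * B') ^ 2 / 2 + lam * norm21 B'

lemma IsGroupLasso.frobNorm_mul_sub_sq_le (hB : IsGroupLasso X (X * B₀ + W) lam B) :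
    frobNorm (X * (B - B₀)) ^ 2 ≤
      2 * (((Xᵀ * W)ᵀ * (B - B₀)).trace + lam * (norm21 B₀ - norm21 B)) := by
  have hmin := hB B₀
  have hresid : X * B₀ + W - X * B = W - X * (B - B₀) := by rw [Matrix.mul_sub]; abel
  have hnoise : (Wᵀ * (X * (B - B₀))).trace = ((Xᵀ * W)ᵀ * (B - B₀)).trace := by
    rw [transpose_mul, transpose_transpose, Matrix.mul_assoc]
  rw [hresid, add_sub_cancel_left, frobNorm_sub_sq, hnoise] at hmin
  linarith

lemma IsGroupLasso.frobNorm_mul_sub_sq_le_sum (hB : IsGroupLasso X (X * B₀ + W) lam B)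
    (hW : ∀ j, l2norm ((Xᵀ * W) j) ≤ lam / 2) (hlam : 0 ≤ lam) {S : Finset (Fin p)}
    (hS : ∀ i ∉ S, B₀ i = 0) :
    frobNorm (X * (B - B₀)) ^ 2 ≤ lam *
      (3 * ∑ i ∈ S, l2norm ((B - B₀) i) - ∑ i ∈ Sᶜ, l2norm ((B - B₀) i)) := by
  have hnoise := trace_transpose_mul_le_mul_norm21 hW (B - B₀)
  have hpenalty := norm21_add_sum_compl_le hS (B - B₀)
  rw [add_sub_cancel] at hpenalty
  rw [norm21, ← Finset.sum_add_sum_compl S] at hnoise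
  have := mul_le_mul_of_nonneg_left hpenalty hlam
  have := hB.frobNorm_mul_sub_sq_le
  linarith

lemma IsGroupLasso.kappaMinusSq_mul_frobNorm_le (hX : SparseEigenvalueCondition X s k)
    (hB : IsGroupLasso X (X * B₀ + W) lam B) (hW : ∀ j, l2norm ((Xᵀ * W) j) ≤ lam / 2)
    (hB₀ : (rowSupport B₀).card ≤ s) :
    kappaMinusSq X k * frobNorm (X * B - X * B₀) ≤ 6 * kappaPlus X k * √s * lam := by
  have hlam : 0 ≤ lam := by
    have := (l2norm_nonneg _).trans (hW ⟨0, (Nat.zero_le s).trans_lt (hX.lt.trans_le hX.le_card)⟩)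
    linarith
  have hbasic := hB.frobNorm_mul_sub_sq_le_sum hW hlam
    fun i hi => apply_eq_zero_of_notMem_rowSupport hi
  have hκ := kappaPlus_nonneg (X := X) (k := k)
  rw [← Matrix.mul_sub]
  set D := B - B₀
  set x := frobNorm (X * D) with hx
  rcases (frobNorm_nonneg (X * D)).eq_or_lt with hx0 | hx0
  · rw [hx, ← hx0, mul_zero]
    positivity
  have hcone : ∑ i ∈ (rowSupport B₀)ᶜ, l2norm (D i) ≤ 3 * ∑ i ∈ rowSupport B₀, l2norm (D i) :=
    sub_nonneg.1 (pos_of_mul_pos_right ((pow_pos hx0 2).trans_le hbasic) hlam).le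
  have hRE := hX.kappaMinusSq_mul_frobNorm_rowRestrict_le_of_cone hB₀ hcone
  refine le_of_mul_le_mul_right ?_ hx0
  calc kappaMinusSq X k * x * x = kappaMinusSq X k * x ^ 2 := by ring
    _ ≤ kappaMinusSq X k * (lam * (3 * (√s * frobNorm (rowRestrict (rowSupport B₀) D)))) := by
      have := sum_l2norm_le_sqrt_mul_frobNorm_rowRestrict hB₀ D
      have : 0 ≤ ∑ i ∈ (rowSupport B₀)ᶜ, l2norm (D i) :=
        Finset.sum_nonneg fun i _ => l2norm_nonneg _
      refine mul_le_mul_of_nonneg_left (hbasic.trans ?_) kappaMinusSq_nonneg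
      gcongr
      linarith
    _ = 3 * lam * √s * (kappaMinusSq X k * frobNorm (rowRestrict (rowSupport B₀) D)) := by ring
    _ ≤ 3 * lam * √s * (2 * kappaPlus X k * x) := by gcongr
    _ = 6 * kappaPlus X k * √s * lam * x := by ring

end GroupLasso

section SingularValues

variable {I J : Type*} [Fintype J] {M : Matrix I J ℝ} {V : Submodule ℝ (J → ℝ)} {j : ℕ}

lemma le_rank_of_disjoint_ker_mulVecLin (h : Disjoint V M.mulVecLin.ker) :
    Module.finrank ℝ V ≤ M.rank := by
  rw [← LinearMap.finrank_range_of_inj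
    (LinearMap.injective_domRestrict_iff.2 h), LinearMap.range_domRestrict]
  exact Submodule.finrank_mono LinearMap.map_le_range

lemma exists_disjoint_ker_mulVecLin_of_le_rank (hj : j ≤ M.rank) :
    ∃ V : Submodule ℝ (J → ℝ), Module.finrank ℝ V = j ∧ Disjoint V M.mulVecLin.ker := by
  obtain ⟨W, hW⟩ := M.mulVecLin.ker.exists_isCompl
  have hrank : Module.finrank ℝ W = M.rank := by
    have := Submodule.finrank_add_eq_of_isCompl hW
    have := M.mulVecLin.finrank_range_add_finrank_ker
    rw [Matrix.rank]
    lia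
  obtain ⟨w, hw⟩ := exists_linearIndependent_of_le_finrank (hj.trans hrank.ge)
  refine ⟨(Submodule.span ℝ (range w)).map W.subtype, ?_,
    hW.disjoint.symm.mono_left (Submodule.map_subtype_le _ _)⟩
  rw [Submodule.finrank_map_subtype_eq, finrank_span_eq_card hw, Fintype.card_fin]

variable [Fintype I]

/-- The least value of `‖M v‖` over the unit vectors `v` of the subspace `V`; `σ_j(M)` is its
largest value over the `j`-dimensional subspaces. If `V` is trivial the value is `0`. -/
def minGain (M : Matrix I J ℝ) (V : Submodule ℝ (J → ℝ)) : ℝ :=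
  sInf {u | ∃ v ∈ V, l2norm v = 1 ∧ u = l2norm (M *ᵥ v)}

lemma minGain_nonneg : 0 ≤ minGain M V :=
  Real.sInf_nonneg (by rintro _ ⟨v, _, _, rfl⟩; exact l2norm_nonneg _)

lemma minGain_mul_l2norm_le {v : J → ℝ} (hv : v ∈ V) :
    minGain M V * l2norm v ≤ l2norm (M *ᵥ v) := by
  rcases eq_or_ne v 0 with rfl | hv0
  · rw [l2norm_zero, mul_zero]
    exact l2norm_nonneg _
  rw [← le_div_iff₀ (l2norm_pos hv0)]
  refine csInf_le ⟨0, by rintro _ ⟨w, _, _, rfl⟩; exact l2norm_nonneg _⟩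
    ⟨(l2norm v)⁻¹ • v, V.smul_mem _ hv, l2norm_inv_smul_self hv0, ?_⟩
  rw [mulVec_smul, l2norm_smul, abs_of_nonneg (inv_nonneg.2 (l2norm_nonneg v)), div_eq_inv_mul]

lemma exists_mem_l2norm_eq_one (hV : V ≠ ⊥) : ∃ v ∈ V, l2norm v = 1 := by
  obtain ⟨v, hv, hv0⟩ := V.exists_mem_ne_zero_of_ne_bot hV
  exact ⟨(l2norm v)⁻¹ • v, V.smul_mem _ hv, l2norm_inv_smul_self hv0⟩

lemma le_minGain (hV : V ≠ ⊥) {c : ℝ} (hc : ∀ v ∈ V, c * l2norm v ≤ l2norm (M *ᵥ v)) :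
    c ≤ minGain M V := by
  obtain ⟨v, hv, hv1⟩ := exists_mem_l2norm_eq_one hV
  refine le_csInf ⟨_, v, hv, hv1, rfl⟩ ?_
  rintro _ ⟨w, hw, hw1, rfl⟩
  simpa only [hw1, mul_one] using hc w hw

lemma minGain_le_singularValue (hV : V ≠ ⊥) :
    minGain M V ≤ singularValue M (Module.finrank ℝ V) := by
  refine le_csSup ⟨frobNorm M, ?_⟩ ⟨V, rfl, rfl⟩
  rintro _ ⟨W, hW, rfl⟩
  have hW0 : W ≠ ⊥ := by
    rintro rfl
    exact hV (Submodule.finrank_eq_zero.1 (hW.symm.trans (finrank_bot ℝ _)))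
  obtain ⟨v, hv, hv1⟩ := exists_mem_l2norm_eq_one hW0
  have hmin := minGain_mul_l2norm_le (M := M) hv
  have hfrob := l2norm_mulVec_le_frobNorm_mul M v
  rw [hv1, mul_one] at hmin hfrob
  exact hmin.trans hfrob

lemma singularValue_le {c : ℝ} (hc : 0 ≤ c)
    (h : ∀ V : Submodule ℝ (J → ℝ), Module.finrank ℝ V = j → minGain M V ≤ c) :
    singularValue M j ≤ c :=
  Real.sSup_le (by rintro _ ⟨V, hV, rfl⟩; exact h V hV) hc

lemma singularValue_nonneg : 0 ≤ singularValue M j :=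
  Real.sSup_nonneg (by rintro _ ⟨V, _, rfl⟩; exact minGain_nonneg)

lemma disjoint_ker_mulVecLin_of_minGain_pos (h : 0 < minGain M V) :
    Disjoint V M.mulVecLin.ker := by
  rw [LinearMap.disjoint_ker]
  intro v hv hMv
  have hle := minGain_mul_l2norm_le (M := M) hv
  rw [← mulVecLin_apply, hMv, l2norm_zero] at hle
  by_contra hv0
  exact (mul_pos h (l2norm_pos hv0)).not_ge hle

lemma minGain_pos_of_disjoint_ker_mulVecLin (hV : V ≠ ⊥) (h : Disjoint V M.mulVecLin.ker) :
    0 < minGain M V := by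
  classical
  obtain ⟨g, hg⟩ := (M.mulVecLin.domRestrict V).exists_leftInverse_of_injective
    (LinearMap.ker_eq_bot.2 (LinearMap.injective_domRestrict_iff.2 h))
  set N := LinearMap.toMatrix' (V.subtype ∘ₗ g) with hN
  have hNM (v) (hv : v ∈ V) : N *ᵥ (M *ᵥ v) = v := by
    rw [hN, LinearMap.toMatrix'_mulVec]
    exact congrArg Subtype.val (LinearMap.congr_fun hg ⟨v, hv⟩)
  have hbound : (frobNorm N + 1)⁻¹ ≤ minGain M V := le_minGain hV fun v hv => by
    have hN0 := frobNorm_nonneg N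
    have hle := l2norm_mulVec_le_frobNorm_mul N (M *ᵥ v)
    rw [hNM v hv] at hle
    rw [inv_mul_le_iff₀ (by positivity), add_one_mul]
    exact hle.trans (le_add_of_nonneg_right (l2norm_nonneg _))
  exact (inv_pos.2 (add_pos_of_nonneg_of_pos (frobNorm_nonneg N) one_pos)).trans_le hbound

lemma singularValue_pos (hj0 : j ≠ 0) (hj : j ≤ M.rank) : 0 < singularValue M j := by
  obtain ⟨V, rfl, hV⟩ := exists_disjoint_ker_mulVecLin_of_le_rank hj
  have hV0 : V ≠ ⊥ := by rintro rfl; exact hj0 (finrank_bot ℝ _)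
  exact (minGain_pos_of_disjoint_ker_mulVecLin hV0 hV).trans_le (minGain_le_singularValue hV0)

lemma le_rank_of_singularValue_pos (h : 0 < singularValue M j) : j ≤ M.rank := by
  by_contra! hj
  refine h.not_ge (singularValue_le le_rfl fun V hV => not_lt.1 fun hpos => hj.not_ge ?_)
  exact hV ▸ le_rank_of_disjoint_ker_mulVecLin (disjoint_ker_mulVecLin_of_minGain_pos hpos)

lemma singularValue_rank_mul_l2norm_le {w : I → ℝ} (hw : w ∈ M.mulVecLin.range) :
    singularValue M M.rank * l2norm w ≤ l2norm (Mᵀ *ᵥ w) := by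
  rcases eq_or_ne w 0 with rfl | hw0
  · rw [l2norm_zero, mul_zero]
    exact l2norm_nonneg _
  have hwpos := l2norm_pos hw0
  rw [← le_div_iff₀ hwpos]
  refine singularValue_le (div_nonneg (l2norm_nonneg _) hwpos.le) fun V hV => ?_
  rcases (minGain_nonneg (M := M) (V := V)).eq_or_lt with h0 | hpos
  · rw [← h0]
    exact div_nonneg (l2norm_nonneg _) hwpos.le
  have hrange : V.map M.mulVecLin = M.mulVecLin.range := by
    refine Submodule.eq_of_le_of_finrank_eq LinearMap.map_le_range ?_
    rw [← LinearMap.range_domRestrict, LinearMap.finrank_range_of_inj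
      (LinearMap.injective_domRestrict_iff.2
        (disjoint_ker_mulVecLin_of_minGain_pos hpos)), hV, Matrix.rank]
  obtain ⟨v, hv, rfl⟩ := hrange ▸ hw
  rw [mulVecLin_apply] at hwpos ⊢
  have hdual : l2norm (M *ᵥ v) ^ 2 ≤ l2norm (Mᵀ *ᵥ (M *ᵥ v)) * l2norm v := by
    rw [l2norm_sq_eq_dotProduct, dotProduct_mulVec, ← mulVec_transpose]
    exact dotProduct_le_l2norm_mul_l2norm _ _
  rw [le_div_iff₀ hwpos]
  refine le_of_mul_le_mul_right ?_ hwpos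
  calc minGain M V * l2norm (M *ᵥ v) * l2norm (M *ᵥ v)
      = minGain M V * l2norm (M *ᵥ v) ^ 2 := by ring
    _ ≤ minGain M V * (l2norm (Mᵀ *ᵥ (M *ᵥ v)) * l2norm v) := by gcongr
    _ = l2norm (Mᵀ *ᵥ (M *ᵥ v)) * (minGain M V * l2norm v) := by ring
    _ ≤ l2norm (Mᵀ *ᵥ (M *ᵥ v)) * l2norm (M *ᵥ v) := by
      gcongr
      · exact l2norm_nonneg _
      · exact minGain_mul_l2norm_le hv

lemma kappaMinus_mul_singularValue_le {n p m k : ℕ} {X : Matrix (Fin n) (Fin p) ℝ}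
    {A : Matrix (Fin p) (Fin m) ℝ} (hj : j ≠ 0) (hA : (rowSupport A).card ≤ k) :
    kappaMinus X k * singularValue A j ≤ singularValue (X * A) j := by
  rcases (kappaMinus_nonneg (X := X) (k := k)).eq_or_lt with h0 | hpos
  · rw [← h0, zero_mul]
    exact singularValue_nonneg
  rw [← le_div_iff₀' hpos]
  refine singularValue_le (div_nonneg singularValue_nonneg hpos.le) fun V hV => ?_
  have hV0 : V ≠ ⊥ := by rintro rfl; exact hj (hV ▸ finrank_bot ℝ _)
  rw [le_div_iff₀' hpos, ← hV]
  refine (le_minGain hV0 fun v hv => ?_).trans (minGain_le_singularValue hV0)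
  have hsparse : kappaMinus X k * l2norm (A *ᵥ v) ≤ l2norm (X *ᵥ (A *ᵥ v)) := by
    refine le_of_sq_le_sq ?_ (l2norm_nonneg _)
    rw [mul_pow, kappaMinus_sq]
    refine kappaMinusSq_mul_l2norm_sq_le hA fun i hi => ?_
    rw [mulVec, apply_eq_zero_of_notMem_rowSupport hi, zero_dotProduct]
  rw [← mulVec_mulVec, mul_assoc]
  exact (mul_le_mul_of_nonneg_left (minGain_mul_l2norm_le hv) hpos.le).trans hsparse

end SingularValues

section SingularVectors

variable {I J : Type*} [Fintype I] [Fintype J] {r : ℕ} {M : Matrix I J ℝ} {V : Matrix J (Fin r) ℝ}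

lemma rank_eq_of_transpose_mul_self_eq_one (hV : Vᵀ * V = 1) : V.rank = r := by
  rw [← rank_transpose_mul_self, hV, rank_one, Fintype.card_fin]

lemma mul_transpose_mul_of_range_le {K : Type*} [Fintype K] {N : Matrix J K ℝ} (hV : Vᵀ * V = 1)
    (hN : N.mulVecLin.range ≤ V.mulVecLin.range) : V * (Vᵀ * N) = N := by
  rw [ext_iff_mulVec]
  intro x
  obtain ⟨y, hy⟩ := hN ⟨x, rfl⟩
  rw [mulVecLin_apply, mulVecLin_apply] at hy
  rw [← mulVec_mulVec, ← mulVec_mulVec, ← hy, mulVec_mulVec y, hV, one_mulVec]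

lemma IsRightSingularVectors.col_mem_range (hV : IsRightSingularVectors M V) {j : Fin r}
    (hj : j.1 + 1 ≤ M.rank) : V.col j ∈ Mᵀ.mulVecLin.range := by
  have hσ := singularValue_pos j.1.succ_ne_zero hj
  refine ⟨(singularValue M (j.1 + 1) ^ 2)⁻¹ • (M *ᵥ V.col j), ?_⟩
  rw [map_smul, mulVecLin_apply, mulVec_mulVec, show V.col j = fun i => V i j from rfl, hV.2 j,
    smul_smul, inv_mul_cancel₀ (by positivity), one_smul]

lemma IsRightSingularVectors.range_transpose_le (hV : IsRightSingularVectors M V)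
    (hM : M.rank ≤ r) : Mᵀ.mulVecLin.range ≤ V.mulVecLin.range := by
  let W : Matrix J (Fin M.rank) ℝ := V.submatrix id (Fin.castLE hM)
  have hW : Wᵀ * W = 1 := by
    rw [show Wᵀ * W = (Vᵀ * V).submatrix (Fin.castLE hM) (Fin.castLE hM) from rfl, hV.1]
    exact submatrix_one _ (Fin.castLE_injective hM)
  have hWM : W.mulVecLin.range ≤ Mᵀ.mulVecLin.range := by
    rw [range_mulVecLin, Submodule.span_le]
    rintro _ ⟨j, rfl⟩
    exact hV.col_mem_range (j := Fin.castLE hM j) j.2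
  have hrange : W.mulVecLin.range = Mᵀ.mulVecLin.range :=
    Submodule.eq_of_le_of_finrank_eq hWM
      ((rank_eq_of_transpose_mul_self_eq_one hW).trans M.rank_transpose.symm)
  rw [← hrange, range_mulVecLin, range_mulVecLin]
  refine Submodule.span_mono ?_
  rintro _ ⟨j, rfl⟩
  exact ⟨Fin.castLE hM j, rfl⟩

lemma IsRightSingularVectors.range_eq (hV : IsRightSingularVectors M V) (hM : M.rank = r) :
    V.mulVecLin.range = Mᵀ.mulVecLin.range :=
  (Submodule.eq_of_le_of_finrank_eq (hV.range_transpose_le hM.le)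
    ((M.rank_transpose.trans hM).trans (rank_eq_of_transpose_mul_self_eq_one hV.1).symm)).symm

lemma IsLeftSingularVectors.mul_transpose_mul {U : Matrix I (Fin r) ℝ}
    (hU : IsLeftSingularVectors M U) (hM : M.rank ≤ r) : U * (Uᵀ * M) = M := by
  simpa only [transpose_transpose] using mul_transpose_mul_of_range_le hU.1
    (IsRightSingularVectors.range_transpose_le hU (M.rank_transpose.le.trans hM))

end SingularVectors

section ProjectionPerturbation

variable {I J K : Type*} [Fintype I] [Fintype J] [Fintype K]

lemma trace_transpose_mul_mul_transpose_mul (W : Matrix I K ℝ) (M : Matrix I J ℝ) :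
    (Mᵀ * (W * (Wᵀ * M))).trace = frobNorm (Wᵀ * M) ^ 2 := by
  rw [frobNorm_sq_eq_trace, transpose_mul, transpose_transpose, Matrix.mul_assoc]

lemma mul_frobNorm_le_frobNorm_mul {N : Matrix K J ℝ} {δ : ℝ} (hδ : 0 ≤ δ)
    (hN : ∀ y, δ * l2norm y ≤ l2norm (Nᵀ *ᵥ y)) (E : Matrix I K ℝ) :
    δ * frobNorm E ≤ frobNorm (E * N) := by
  refine le_of_sq_le_sq ?_ (frobNorm_nonneg _)
  rw [mul_pow, frobNorm_sq_eq_sum_row, frobNorm_sq_eq_sum_row, Finset.mul_sum]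
  refine Finset.sum_le_sum fun i _ => ?_
  rw [mul_apply_eq_vecMul, ← mulVec_transpose, ← mul_pow]
  exact pow_le_pow_left₀ (mul_nonneg hδ (l2norm_nonneg _)) (hN _) 2

variable [DecidableEq K]

lemma frobNorm_mul_sq_of_transpose_mul_self_eq_one {W : Matrix I K ℝ} (hW : Wᵀ * W = 1)
    (N : Matrix K J ℝ) : frobNorm (W * N) ^ 2 = frobNorm N ^ 2 := by
  rw [frobNorm_sq_eq_trace, frobNorm_sq_eq_trace, transpose_mul, Matrix.mul_assoc,
    ← Matrix.mul_assoc Wᵀ, hW, Matrix.one_mul]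

lemma frobNorm_sub_mul_transpose_mul_sq {W : Matrix I K ℝ} (hW : Wᵀ * W = 1)
    (M : Matrix I J ℝ) :
    frobNorm (M - W * (Wᵀ * M)) ^ 2 = frobNorm M ^ 2 - frobNorm (Wᵀ * M) ^ 2 := by
  rw [frobNorm_sub_sq, trace_transpose_mul_mul_transpose_mul,
    frobNorm_mul_sq_of_transpose_mul_self_eq_one hW]
  ring

lemma frobNorm_sub_mul_transpose_mul_le {W : Matrix I K ℝ} (hW : Wᵀ * W = 1)
    (M : Matrix I J ℝ) : frobNorm (M - W * (Wᵀ * M)) ≤ frobNorm M := by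
  refine le_of_sq_le_sq ?_ (frobNorm_nonneg _)
  rw [frobNorm_sub_mul_transpose_mul_sq hW]
  exact sub_le_self _ (sq_nonneg _)

lemma frobNorm_projection_sub_projection_sq {U U₁ : Matrix I K ℝ} (hU : Uᵀ * U = 1)
    (hU₁ : U₁ᵀ * U₁ = 1) :
    frobNorm (U₁ * U₁ᵀ - U * Uᵀ) ^ 2 = 2 * frobNorm (U - U₁ * (U₁ᵀ * U)) ^ 2 := by
  have hcard {W : Matrix I K ℝ} (hW : Wᵀ * W = 1) : frobNorm W ^ 2 = Fintype.card K := by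
    rw [frobNorm_sq_eq_trace, hW, trace_one]
  have hcross : ((U₁ * U₁ᵀ)ᵀ * (U * Uᵀ)).trace = frobNorm (U₁ᵀ * U) ^ 2 := by
    rw [← trace_transpose_mul_mul_transpose_mul, transpose_mul, transpose_transpose,
      ← Matrix.mul_assoc _ U, trace_mul_comm, Matrix.mul_assoc U₁]
  rw [frobNorm_sub_sq, hcross, frobNorm_mul_sq_of_transpose_mul_self_eq_one hU₁,
    frobNorm_mul_sq_of_transpose_mul_self_eq_one hU, frobNorm_transpose, frobNorm_transpose,
    frobNorm_sub_mul_transpose_mul_sq hU₁, hcard hU, hcard hU₁]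
  ring

/- Wedin's argument: the part `E` of `U` off the range of `U₁` satisfies
`E * (Uᵀ * H) = (1 - U₁ * U₁ᵀ) * (H - G)`, because `U₁ * U₁ᵀ` fixes `G`. -/
lemma mul_frobNorm_projection_sub_projection_le {U U₁ : Matrix I K ℝ} {G H : Matrix I J ℝ} {δ : ℝ}
    (hU : Uᵀ * U = 1) (hU₁ : U₁ᵀ * U₁ = 1) (hUH : U * (Uᵀ * H) = H) (hU₁G : U₁ * (U₁ᵀ * G) = G)
    (hδ : 0 ≤ δ) (hH : ∀ y, δ * l2norm y ≤ l2norm ((Hᵀ * U) *ᵥ y)) :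
    δ * frobNorm (U₁ * U₁ᵀ - U * Uᵀ) ≤ √2 * frobNorm (G - H) := by
  set E := U - U₁ * (U₁ᵀ * U) with hE
  have hEH : E * (Uᵀ * H) = (H - G) - U₁ * (U₁ᵀ * (H - G)) := by
    rw [Matrix.mul_sub, Matrix.mul_sub, hU₁G, hE, Matrix.sub_mul, hUH, Matrix.mul_assoc,
      Matrix.mul_assoc, hUH]
    abel
  have hEle : δ * frobNorm E ≤ frobNorm (G - H) :=
    calc δ * frobNorm E ≤ frobNorm (E * (Uᵀ * H)) :=
          mul_frobNorm_le_frobNorm_mul hδ (by simpa only [transpose_mul, transpose_transpose]) E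
      _ ≤ frobNorm (H - G) := hEH ▸ frobNorm_sub_mul_transpose_mul_le hU₁ _
      _ = frobNorm (G - H) := frobNorm_sub_comm _ _
  have hproj : frobNorm (U₁ * U₁ᵀ - U * Uᵀ) = √2 * frobNorm E := by
    rw [← Real.sqrt_sq (frobNorm_nonneg (_ - _)), frobNorm_projection_sub_projection_sq hU hU₁,
      Real.sqrt_mul zero_le_two, Real.sqrt_sq (frobNorm_nonneg _)]
  rw [hproj, mul_left_comm]
  exact mul_le_mul_of_nonneg_left hEle (Real.sqrt_nonneg 2)

end ProjectionPerturbation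

section SinTheta

variable {I J : Type*} [Fintype I] [Fintype J] {r : ℕ} {T : Matrix I J ℝ} {U : Matrix I (Fin r) ℝ}
  {V V₀ : Matrix J (Fin r) ℝ}

lemma singularValue_mul_l2norm_le_transpose_mulVec {N : Matrix (Fin r) (Fin r) ℝ}
    (hN : 0 < singularValue N r) (w : Fin r → ℝ) :
    singularValue N r * l2norm w ≤ l2norm (Nᵀ *ᵥ w) := by
  have hrank : N.rank = r := N.rank_le_width.antisymm (le_rank_of_singularValue_pos hN)
  have htop : N.mulVecLin.range = ⊤ :=
    Submodule.eq_top_of_finrank_eq (hrank.trans (Module.finrank_fin_fun ℝ).symm)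
  have hle := singularValue_rank_mul_l2norm_le (M := N) (htop ▸ Submodule.mem_top (x := w))
  rwa [hrank] at hle

lemma singularValue_mul_singularValue_mul_l2norm_le (hU : IsLeftSingularVectors T U)
    (hV : IsRightSingularVectors T V) (hT : T.rank = r) (hV₀ : 0 < singularValue (Vᵀ * V₀) r)
    (y : Fin r → ℝ) :
    singularValue (Vᵀ * V₀) r * singularValue T r * l2norm y ≤
      l2norm (((T * V₀)ᵀ * U) *ᵥ y) := by
  have hUy : U *ᵥ y ∈ T.mulVecLin.range := by
    rw [← transpose_transpose T, ← hU.range_eq (T.rank_transpose.trans hT)]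
    exact ⟨y, rfl⟩
  obtain ⟨w, hVw : V *ᵥ w = Tᵀ *ᵥ (U *ᵥ y)⟩ := hV.range_transpose_le hT.le ⟨U *ᵥ y, rfl⟩
  have hw : singularValue T r * l2norm y ≤ l2norm w := by
    rw [← l2norm_mulVec_of_transpose_mul_self_eq_one hV.1 w, hVw,
      ← l2norm_mulVec_of_transpose_mul_self_eq_one hU.1 y]
    simpa only [hT] using singularValue_rank_mul_l2norm_le hUy
  calc singularValue (Vᵀ * V₀) r * singularValue T r * l2norm y
      = singularValue (Vᵀ * V₀) r * (singularValue T r * l2norm y) := mul_assoc _ _ _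
    _ ≤ singularValue (Vᵀ * V₀) r * l2norm w := mul_le_mul_of_nonneg_left hw hV₀.le
    _ ≤ l2norm ((Vᵀ * V₀)ᵀ *ᵥ w) := singularValue_mul_l2norm_le_transpose_mulVec hV₀ w
    _ = l2norm (((T * V₀)ᵀ * U) *ᵥ y) := by
      rw [transpose_mul, transpose_transpose, ← mulVec_mulVec, hVw, transpose_mul,
        ← mulVec_mulVec, ← mulVec_mulVec]

theorem singularValue_mul_frobNorm_projection_sub_projection_le {G U₁ : Matrix I (Fin r) ℝ}
    (hU : IsLeftSingularVectors T U) (hV : IsRightSingularVectors T V) (hT : T.rank ≤ r)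
    (hU₁ : IsLeftSingularVectors G U₁) :
    singularValue (Vᵀ * V₀) r * singularValue T r * frobNorm (U₁ * U₁ᵀ - U * Uᵀ) ≤
      √2 * frobNorm (G - T * V₀) := by
  have hσ : 0 ≤ singularValue (Vᵀ * V₀) r * singularValue T r :=
    mul_nonneg singularValue_nonneg singularValue_nonneg
  rcases hσ.eq_or_lt with h0 | hpos
  · rw [← h0, zero_mul]
    exact mul_nonneg (Real.sqrt_nonneg 2) (frobNorm_nonneg _)
  have hV₀pos : 0 < singularValue (Vᵀ * V₀) r := pos_of_mul_pos_left hpos singularValue_nonneg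
  have hTpos : 0 < singularValue T r := pos_of_mul_pos_right hpos singularValue_nonneg
  refine mul_frobNorm_projection_sub_projection_le hU.1 hU₁.1 ?_
    (hU₁.mul_transpose_mul (G.rank_le_card_width.trans_eq (Fintype.card_fin r))) hσ
    (singularValue_mul_singularValue_mul_l2norm_le hU hV
      (hT.antisymm (le_rank_of_singularValue_pos hTpos)) hV₀pos)
  rw [← Matrix.mul_assoc Uᵀ, ← Matrix.mul_assoc, hU.mul_transpose_mul hT]

end SinTheta

section Accuracy

variable {n m p r s k : ℕ} {X : Matrix (Fin n) (Fin p) ℝ}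

lemma card_rowSupport_mul_le {I J K : Type*} [Fintype I] [Fintype J] [Fintype K]
    (A : Matrix I J ℝ) (W : Matrix J K ℝ) :
    (rowSupport (A * W)).card ≤ (rowSupport A).card := by
  refine Finset.card_le_card fun i hi => ?_
  rw [mem_rowSupport] at hi ⊢
  contrapose! hi
  rw [mul_apply_eq_vecMul, hi, zero_vecMul]

theorem IsGroupLasso.mul_frobNorm_projection_sub_projection_le
    {A : Matrix (Fin p) (Fin m) ℝ} {V V₀ : Matrix (Fin m) (Fin r) ℝ} {B : Matrix (Fin p) (Fin r) ℝ}
    {U U₁ : Matrix (Fin n) (Fin r) ℝ} {W : Matrix (Fin n) (Fin m) ℝ} {lam : ℝ}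
    (hr : r ≠ 0) (hX : SparseEigenvalueCondition X s k)
    (hB : IsGroupLasso X ((X * A + W) * V₀) lam B)
    (hW : ∀ j, l2norm ((Xᵀ * (W * V₀)) j) ≤ lam / 2)
    (hA : A.rank = r) (hAs : (rowSupport A).card ≤ s)
    (hU : IsLeftSingularVectors (X * A) U) (hV : IsRightSingularVectors (X * A) V)
    (hU₁ : IsLeftSingularVectors (X * B) U₁) :
    kappaMinus X k ^ 3 * singularValue (Vᵀ * V₀) r * singularValue A r *
      frobNorm (U₁ * U₁ᵀ - U * Uᵀ) ≤ 6 * √2 * kappaPlus X k * √s * lam := by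
  have hlasso : kappaMinus X k ^ 2 * frobNorm (X * B - X * A * V₀) ≤
      6 * kappaPlus X k * √s * lam := by
    rw [Matrix.add_mul, Matrix.mul_assoc] at hB
    rw [kappaMinus_sq, Matrix.mul_assoc]
    exact hB.kappaMinusSq_mul_frobNorm_le hX hW ((card_rowSupport_mul_le A V₀).trans hAs)
  have hσ : kappaMinus X k * singularValue A r ≤ singularValue (X * A) r :=
    kappaMinus_mul_singularValue_le hr (hAs.trans hX.lt.le)
  have hsin := singularValue_mul_frobNorm_projection_sub_projection_le (V₀ := V₀) hU hV
    ((rank_mul_le_right X A).trans hA.le) hU₁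
  have := kappaMinus_nonneg (X := X) (k := k)
  have hV₀ := singularValue_nonneg (M := Vᵀ * V₀) (j := r)
  have hF := frobNorm_nonneg (U₁ * U₁ᵀ - U * Uᵀ)
  set F := frobNorm (U₁ * U₁ᵀ - U * Uᵀ)
  calc kappaMinus X k ^ 3 * singularValue (Vᵀ * V₀) r * singularValue A r * F
      = kappaMinus X k ^ 2 * (singularValue (Vᵀ * V₀) r *
          (kappaMinus X k * singularValue A r) * F) := by ring
    _ ≤ kappaMinus X k ^ 2 * (singularValue (Vᵀ * V₀) r * singularValue (X * A) r * F) := by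
      gcongr
    _ ≤ kappaMinus X k ^ 2 * (√2 * frobNorm (X * B - X * A * V₀)) := by gcongr
    _ = √2 * (kappaMinus X k ^ 2 * frobNorm (X * B - X * A * V₀)) := mul_left_comm _ _ _
    _ ≤ √2 * (6 * kappaPlus X k * √s * lam) := by gcongr
    _ = 6 * √2 * kappaPlus X k * √s * lam := by ring

theorem IsGroupLasso.frobNorm_projection_sub_projection_le
    {A : Matrix (Fin p) (Fin m) ℝ} {V V₀ : Matrix (Fin m) (Fin r) ℝ} {B : Matrix (Fin p) (Fin r) ℝ}
    {U U₁ : Matrix (Fin n) (Fin r) ℝ} {W : Matrix (Fin n) (Fin m) ℝ} {lam c d γ : ℝ}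
    (hr : r ≠ 0) (hX : SparseEigenvalueCondition X s k)
    (hB : IsGroupLasso X ((X * A + W) * V₀) lam B)
    (hW : ∀ j, l2norm ((Xᵀ * (W * V₀)) j) ≤ lam / 2) (hA : memTheta A s r d γ)
    (hU : IsLeftSingularVectors (X * A) U) (hV : IsRightSingularVectors (X * A) V)
    (hc : 0 < c) (hV₀ : c ≤ singularValue (Vᵀ * V₀) r)
    (hU₁ : IsLeftSingularVectors (X * B) U₁) :
    frobNorm (U₁ * U₁ᵀ - U * Uᵀ) ≤
      6 * √2 * kappaPlus X k / (kappaMinus X k ^ 3 * c) * √s * lam / d := by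
  obtain ⟨hrank, hd, -, hdA, hAs⟩ := hA
  have hκ := hX.kappaMinus_pos
  rw [div_mul_eq_mul_div, div_mul_eq_mul_div, div_div, le_div_iff₀' (by positivity)]
  refine le_trans ?_ (hB.mul_frobNorm_projection_sub_projection_le hr hX hW hrank hAs hU hV hU₁)
  have hF := frobNorm_nonneg (U₁ * U₁ᵀ - U * Uᵀ)
  have hV₀nonneg := singularValue_nonneg (M := Vᵀ * V₀) (j := r)
  gcongr

end Accuracy

/-- Accuracy of U_{(1)}. Under the conditions of the SARRS upper bound theorem,
there is a constant C depending only on κ₋(s_*) = a, κ₊(s_*) = b, c_* and c₀ such that with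
probability at least 1 − 1/p, ‖U_{(1)}U_{(1)}' − UU'‖_F ≤ C √s λ / d. -/
theorem stmt7 :
    ∀ a b cstar c0 : ℝ, 0 < a → 0 < c0 → 0 < cstar →
    ∃ C : ℝ, 0 < C ∧
    ∀ (n m p s r sstar : ℕ) (d γ σ lam K : ℝ)
      (X : Matrix (Fin n) (Fin p) ℝ) (A : Matrix (Fin p) (Fin m) ℝ)
      (U : Matrix (Fin n) (Fin r) ℝ) (V V0 : Matrix (Fin m) (Fin r) ℝ)
      (B1 : Matrix (Fin n) (Fin m) ℝ → Matrix (Fin p) (Fin r) ℝ)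
      (U1 : Matrix (Fin n) (Fin m) ℝ → Matrix (Fin n) (Fin r) ℝ),
      1 ≤ r → r ≤ s → 1 ≤ γ →
      memTheta A s r d γ →
      0 < σ →
      (∀ j : Fin p,
        4 * σ * l2norm (Xᵀ j) * (Real.sqrt r + Real.sqrt (4 * Real.log p)) ≤ lam) →
      1 < K → K⁻¹ ≤ kappaMinus X sstar → kappaMinus X sstar ≤ kappaPlus X sstar →
      kappaPlus X sstar ≤ K →
      kappaMinus X sstar = a → kappaPlus X sstar = b →
      2 * s ≤ sstar →
      6 * cstar ≤ Real.sqrt ((sstar : ℝ) / (s : ℝ) - 1) →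
      (kappaPlusSq X sstar - kappaMinusSq X (2 * sstar)) / kappaMinusSq X sstar < cstar →
      IsLeftSingularVectors (X * A) U →
      IsRightSingularVectors (X * A) V →
      V0ᵀ * V0 = 1 →
      c0 ≤ singularValue (Vᵀ * V0) r →
      -- step 1: group Lasso with response Y_{(1)} V_{(0)}, where Y_{(1)} = XA + Z_{(1)}
      (∀ z1 : Matrix (Fin n) (Fin m) ℝ, ∀ B' : Matrix (Fin p) (Fin r) ℝ,
        frobNorm ((X * A + z1) * V0 - X * B1 z1) ^ 2 / 2 + lam * norm21 (B1 z1) ≤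
          frobNorm ((X * A + z1) * V0 - X * B') ^ 2 / 2 + lam * norm21 B') →
      -- step 2: U_{(1)} collects the top-r left singular vectors of X B_{(1)}
      (∀ z1 : Matrix (Fin n) (Fin m) ℝ, IsLeftSingularVectors (X * B1 z1) (U1 z1)) →
      ENNReal.ofReal (1 - 1 / (p : ℝ)) ≤
        gaussianMatrix n m (Real.toNNReal ((2 * σ) ^ 2))
          {z | frobNorm (U1 z * (U1 z)ᵀ - U * Uᵀ) ≤ C * Real.sqrt s * lam / d} := by
  intro a b cstar c0 ha hc0 _
  refine ⟨6 * √2 * max b a / (a ^ 3 * c0), by positivity, ?_⟩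
  intro n m p s r k d γ σ lam K X A U V V0 B1 U1 hr hrs _ hA hσ hlam _ _ hab _ hκm hκp hsk hc hgap
    hU hV hV0 halign hB1 hU1
  subst hκm hκp
  rw [max_eq_left hab]
  have hX : SparseEigenvalueCondition X s k :=
    sparseEigenvalueCondition_of_div_lt (by lia) hsk ha hc hgap
  refine (ofReal_one_sub_inv_le_gaussianMatrix_of_le (by lia) hσ hV0 hlam).trans
    (measure_mono fun z hz => ?_)
  exact IsGroupLasso.frobNorm_projection_sub_projection_le (by lia) hX (hB1 z) hz hA hU hV hc0
    halign (hU1 z)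

end
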